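/- Let n > 4 and let H(n) be the Hamiltonian Lie superalgebra over ℂ. Then every super-biderivation of H(n) is an inner super-biderivation; that is, for every homogeneous super-biderivation f of H(n) there exists λ ∈ ℂ such that f(x,y) = λ[x,y] for all x, y ∈ H(n) (equivalently BDer(H(n)) = IBDer(H(n))). -/

import Mathlib

open scoped BigOperators

noncomputable section

namespace CartanSuper

/-- Coordinates of the exterior algebra `Λ(n)` with respect to the monomial basis
`{x_S : S ⊆ {1,…,n}}`. -/
abbrev Lambda (n : ℕ) := Finset (Fin n) → ℂ

/-- Endomorphism algebra of `Λ(n)`. -/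
abbrev E (n : ℕ) := Module.End ℂ (Lambda n)

variable (n : ℕ)

/-- `(−1)^k`. -/
def msign (k : ℕ) : ℂ := (-1 : ℂ) ^ k

/-- The basis monomial `x_S = x_{i₁}⋯x_{i_k}` (indices in increasing order). -/
def mono (S : Finset (Fin n)) : Lambda n := fun T => if T = S then 1 else 0

/-- Number of inversions between `S` and `T`. -/
def inversions (S T : Finset (Fin n)) : ℕ := ((S ×ˢ T).filter fun p => p.2 < p.1).card

/-- The multiplication of `Λ(n)` in coordinates:
`x_S · x_T = (−1)^{inversions} x_{S ∪ T}` for disjoint `S, T` and `0` otherwise. -/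
def lmulFun (f g : Lambda n) : Lambda n :=
  fun U => ∑ S ∈ U.powerset, msign (inversions n S (U \ S)) * f S * g (U \ S)

/-- Left multiplication by an element of `Λ(n)`, as a linear map `Λ(n) →ₗ End Λ(n)`. -/
def mulOp : Lambda n →ₗ[ℂ] E n where
  toFun f :=
    { toFun := lmulFun n f
      map_add' := by
        intro g h; funext U
        simp [lmulFun, mul_add, Finset.sum_add_distrib]
      map_smul' := by
        intro c g; funext U
        simp only [lmulFun, Pi.smul_apply, smul_eq_mul, RingHom.id_apply, Finset.mul_sum]
        exact Finset.sum_congr rfl (by intros; ring) }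
  map_add' := by
    intro f g; apply LinearMap.ext; intro h; funext U
    show lmulFun n (f + g) h U = lmulFun n f h U + lmulFun n g h U
    simp only [lmulFun]
    rw [← Finset.sum_add_distrib]
    exact Finset.sum_congr rfl (by intros; simp [Pi.add_apply]; ring)
  map_smul' := by
    intro c f; apply LinearMap.ext; intro h; funext U
    show lmulFun n (c • f) h U = (c • lmulFun n f h) U
    simp only [lmulFun, Pi.smul_apply, smul_eq_mul, Finset.mul_sum]
    exact Finset.sum_congr rfl (by intros; ring)

/-- The superderivation `∂_i` of `Λ(n)`, in coordinates. -/
def pd (i : Fin n) : E n where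
  toFun f := fun S =>
    if i ∈ S then 0 else msign (S.filter (· < i)).card * f (insert i S)
  map_add' := by
    intro f g; funext S; by_cases h : i ∈ S <;> simp [h, mul_add]
  map_smul' := by
    intro c f; funext S; by_cases h : i ∈ S <;> simp [h] <;> ring

/-- The parity operator `σ` of `Λ(n)`: `σ(x_S) = (−1)^{|S|} x_S`. -/
def par : E n where
  toFun f := fun S => msign S.card * f S
  map_add' := by intro f g; funext S; simp [mul_add]
  map_smul' := by intro c f; funext S; simp; ring

/-- The super-commutator `[D,F] = D∘F − (−1)^{|D||F|} F∘D`, extended bilinearly to all of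
`End Λ(n)` using the parity operator `σ`
(for homogeneous `D`, `σ∘D∘σ = (−1)^{|D|} D`). -/
def sbFun (D F : E n) : E n :=
  D * F - (2:ℂ)⁻¹ • ((F + par n * F * par n) * D + (F - par n * F * par n) * (par n * D * par n))

/-- The super-commutator as a bilinear map. -/
def sbL : E n →ₗ[ℂ] E n →ₗ[ℂ] E n :=
  LinearMap.mk₂ ℂ (sbFun n)
    (fun D D' F => by
      simp only [sbFun, add_mul, sub_mul, mul_add, mul_sub, smul_mul_assoc, mul_smul_comm,
        smul_add, smul_sub]
      module)
    (fun c D F => by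
      simp only [sbFun, add_mul, sub_mul, mul_add, mul_sub, smul_mul_assoc, mul_smul_comm,
        smul_add, smul_sub]
      module)
    (fun D F F' => by
      simp only [sbFun, add_mul, sub_mul, mul_add, mul_sub, smul_mul_assoc, mul_smul_comm,
        smul_add, smul_sub]
      module)
    (fun c D F => by
      simp only [sbFun, add_mul, sub_mul, mul_add, mul_sub, smul_mul_assoc, mul_smul_comm,
        smul_add, smul_sub]
      module)

/-- Shorthand for the super-commutator. -/
def sb (D F : E n) : E n := sbL n D F

/-- The ℤ₂-homogeneous component of `Λ(n)` of parity `p`. -/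
def lpar (p : ZMod 2) : Submodule ℂ (Lambda n) where
  carrier := {f | ∀ S : Finset (Fin n), (S.card : ZMod 2) ≠ p → f S = 0}
  add_mem' := by intro f g hf hg S hS; simp [Pi.add_apply, hf S hS, hg S hS]
  zero_mem' := by intro S hS; rfl
  smul_mem' := by intro c f hf S hS; simp [Pi.smul_apply, hf S hS]

/-- The ℤ-homogeneous component of `Λ(n)` of degree `m` (zero unless `0 ≤ m ≤ n`). -/
def ldeg (m : ℤ) : Submodule ℂ (Lambda n) where
  carrier := {f | ∀ S : Finset (Fin n), (S.card : ℤ) ≠ m → f S = 0}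
  add_mem' := by intro f g hf hg S hS; simp [Pi.add_apply, hf S hS, hg S hS]
  zero_mem' := by intro S hS; rfl
  smul_mem' := by intro c f hf S hS; simp [Pi.smul_apply, hf S hS]

/-- Endomorphisms of `Λ(n)` that are ℤ₂-homogeneous of parity `p`. -/
def epar (p : ZMod 2) : Submodule ℂ (E n) where
  carrier := {D | ∀ (q : ZMod 2), ∀ f ∈ lpar n q, D f ∈ lpar n (q + p)}
  add_mem' := by
    intro D F hD hF q f hf
    simpa [LinearMap.add_apply] using (lpar n (q + p)).add_mem (hD q f hf) (hF q f hf)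
  zero_mem' := by intro q f hf; simpa using (lpar n (q + p)).zero_mem
  smul_mem' := by
    intro c D hD q f hf
    simpa [LinearMap.smul_apply] using (lpar n (q + p)).smul_mem c (hD q f hf)

/-- Endomorphisms of `Λ(n)` that are ℤ-homogeneous of degree `d`. -/
def edeg (d : ℤ) : Submodule ℂ (E n) where
  carrier := {D | ∀ (m : ℤ), ∀ f ∈ ldeg n m, D f ∈ ldeg n (m + d)}
  add_mem' := by
    intro D F hD hF m f hf
    simpa [LinearMap.add_apply] using (ldeg n (m + d)).add_mem (hD m f hf) (hF m f hf)
  zero_mem' := by intro m f hf; simpa using (ldeg n (m + d)).zero_mem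
  smul_mem' := by
    intro c D hD m f hf
    simpa [LinearMap.smul_apply] using (ldeg n (m + d)).smul_mem c (hD m f hf)

/-- The linear map `(f₁,…,f_n) ↦ ∑ᵢ fᵢ ∂ᵢ`. -/
def Wmap : (Fin n → Lambda n) →ₗ[ℂ] E n where
  toFun F := ∑ i, mulOp n (F i) * pd n i
  map_add' := by
    intro F G
    simp only [Pi.add_apply, map_add, add_mul, Finset.sum_add_distrib]
  map_smul' := by
    intro c F
    simp only [RingHom.id_apply, Pi.smul_apply, map_smul, smul_mul_assoc, Finset.smul_sum]

/-- The divergence `(f₁,…,f_n) ↦ ∑ᵢ ∂ᵢ(fᵢ)`. -/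
def divMap : (Fin n → Lambda n) →ₗ[ℂ] Lambda n where
  toFun F := ∑ i, pd n i (F i)
  map_add' := by
    intro F G
    simp only [Pi.add_apply, map_add, Finset.sum_add_distrib]
  map_smul' := by
    intro c F
    simp only [RingHom.id_apply, Pi.smul_apply, map_smul, Finset.smul_sum]

/-- The Witt type Lie superalgebra `W(n) = {∑ fᵢ∂ᵢ : fᵢ ∈ Λ(n)}`. -/
def Wn : Submodule ℂ (E n) := LinearMap.range (Wmap n)

/-- Divergence-free coefficient tuples. -/
def divFree : Submodule ℂ (Fin n → Lambda n) := LinearMap.ker (divMap n)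

/-- The special type Lie superalgebra `S(n) = {∑ fᵢ∂ᵢ : ∑ ∂ᵢ(fᵢ) = 0}`. -/
def Sn : Submodule ℂ (E n) := (divFree n).map (Wmap n)

/-- The top monomial `ω = x₁x₂⋯x_n`. -/
def omegaTop : Lambda n := mono n Finset.univ

/-- `1 − x₁x₂⋯x_n`. -/
def oneM : Lambda n := mono n ∅ - omegaTop n

/-- Multiplication of every coefficient by `1 − x₁⋯x_n`. -/
def oneMScale : (Fin n → Lambda n) →ₗ[ℂ] (Fin n → Lambda n) :=
  LinearMap.pi fun i => (mulOp n (oneM n)) ∘ₗ LinearMap.proj i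

/-- The Lie superalgebra `S̃(n) = {(1−x₁⋯x_n)∑ fᵢ∂ᵢ : ∑ ∂ᵢ(fᵢ) = 0}` (`n` even). -/
def Stn : Submodule ℂ (E n) := (divFree n).map (Wmap n ∘ₗ oneMScale n)

/-- The conjugate index `i'`. -/
def cidx (i : Fin n) : Fin n :=
  ⟨if i.val < n / 2 then i.val + n / 2 else if i.val < 2 * (n / 2) then i.val - n / 2 else i.val,
   by have := i.isLt; split_ifs <;> omega⟩

/-- The linear map `f ↦ D_H(f) = (−1)^{|f|} ∑ᵢ ∂ᵢ(f)∂_{i'}` (the sign is implemented by the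
parity operator `σ`, so that this is a single linear map agreeing with `D_H` on homogeneous
elements). -/
def DHmap : Lambda n →ₗ[ℂ] E n where
  toFun f := ∑ i, mulOp n (pd n i (par n f)) * pd n (cidx n i)
  map_add' := by
    intro f g
    simp only [map_add, add_mul, Finset.sum_add_distrib]
  map_smul' := by
    intro c f
    simp only [RingHom.id_apply, map_smul, smul_mul_assoc, Finset.smul_sum]

/-- Evaluation of the top coefficient. -/
def evalTop : Lambda n →ₗ[ℂ] ℂ := LinearMap.proj Finset.univ

/-- The Hamiltonian Lie superalgebra `H(n) = {D_H(f) : f ∈ ⊕_{i=0}^{n−1} Λ(n)_i}`. -/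
def Hn : Submodule ℂ (E n) := (LinearMap.ker (evalTop n)).map (DHmap n)

/-- `H̃(n) = {D_H(f) : f ∈ Λ(n)}`. -/
def HtN : Submodule ℂ (E n) := LinearMap.range (DHmap n)

/-- The degree derivation `𝒞 = ∑ᵢ xᵢ∂ᵢ`. -/
def CC : E n := ∑ i, mulOp n (mono n {i}) * pd n i

/-- The span of the diagonal elements `xᵢ∂ᵢ`. -/
def diagSpan : Submodule ℂ (E n) :=
  Submodule.span ℂ (Set.range fun i : Fin n => mulOp n (mono n {i}) * pd n i)

/-- The four families of Cartan type Lie superalgebras. -/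
inductive CT | W | S | St | H
deriving DecidableEq

/-- Validity of the parameter `n` for each family. -/
def CT.valid : CT → ℕ → Prop
  | .W, n => 4 ≤ n
  | .S, n => 4 ≤ n
  | .St, n => 4 ≤ n ∧ Even n
  | .H, n => 4 < n

/-- The Cartan type Lie superalgebra `L` itself. -/
def CT.algebra : CT → (n : ℕ) → Submodule ℂ (E n)
  | .W, n => Wn n
  | .S, n => Sn n
  | .St, n => Stn n
  | .H, n => Hn n

/-- The extended algebra `L'`: `L' = L` for `W(n)` and `S̃(n)`, `L' = S(n) ⊕ ℂ𝒞` for `S(n)`,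
and `L' = H̃(n) ⊕ ℂ𝒞` for `H(n)`. -/
def CT.prime : CT → (n : ℕ) → Submodule ℂ (E n)
  | .W, n => Wn n
  | .S, n => Sn n ⊔ Submodule.span ℂ {CC n}
  | .St, n => Stn n
  | .H, n => HtN n ⊔ Submodule.span ℂ {CC n}

/-- The top degree `ξ_L` of the ℤ-grading. -/
def CT.xi : CT → (n : ℕ) → ℤ
  | .W, n => (n : ℤ) - 1
  | .S, n => (n : ℤ) - 2
  | .St, n => (n : ℤ) - 2
  | .H, n => (n : ℤ) - 3

/-- The ℤ-grading component `L_j = L ∩ W(n)_j`; for `S̃(n)` the component of degree `−1`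
is `span{(1−x₁⋯x_n)∂ᵢ}` instead. -/
def CT.grade (t : CT) (n : ℕ) (j : ℤ) : Submodule ℂ (E n) :=
  match t with
  | .St =>
      if j = -1 then
        Submodule.span ℂ (Set.range fun i : Fin n => mulOp n (oneM n) * pd n i)
      else Stn n ⊓ edeg n j
  | t => t.algebra n ⊓ edeg n j

/-- The ℤ-grading component `L'_j` of the extended algebra `L'`. -/
def CT.grade' (t : CT) (n : ℕ) (j : ℤ) : Submodule ℂ (E n) :=
  match t with
  | .St => CT.grade .St n j
  | t => t.prime n ⊓ edeg n j

/-- The standard Cartan subalgebra `H_L` of `L`: the part of the diagonal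
`span{xᵢ∂ᵢ}` lying in `L`. -/
def CT.cartan (t : CT) (n : ℕ) : Submodule ℂ (E n) := t.algebra n ⊓ diagSpan n

/-- The weight space of `M ⊆ End Λ(n)` of weight `μ ∈ H_L^*` under the adjoint action
of the standard Cartan subalgebra of `L`. -/
def wtsp (t : CT) (n : ℕ) (M : Submodule ℂ (E n)) (μ : Module.Dual ℂ (t.cartan n)) :
    Submodule ℂ (E n) where
  carrier := {x | x ∈ M ∧ ∀ h : t.cartan n, sbL n h x = μ h • x}
  add_mem' := by
    rintro x y ⟨hx, hx'⟩ ⟨hy, hy'⟩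
    exact ⟨M.add_mem hx hy, fun h => by simp [map_add, hx' h, hy' h, smul_add]⟩
  zero_mem' := ⟨M.zero_mem, fun h => by simp⟩
  smul_mem' := by
    rintro c x ⟨hx, hx'⟩
    exact ⟨M.smul_mem c hx, fun h => by simp [map_smul, hx' h, smul_comm c]⟩

/-- The set of roots of `M` with respect to the standard Cartan subalgebra of `L`:
the nonzero weights with nonzero weight space. -/
def CT.roots (t : CT) (n : ℕ) (M : Submodule ℂ (E n)) : Set (Module.Dual ℂ (t.cartan n)) :=
  {ε | ε ≠ 0 ∧ wtsp t n M ε ≠ ⊥}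

/-- The sign `(−1)^p` for `p ∈ ℤ₂`. -/
def sgn (p : ZMod 2) : ℂ := (-1 : ℂ) ^ p.val

/-- `f` is a super-biderivation of `L` of ℤ₂-degree `pf`:
a bilinear map with `f(L_α, L_β) ⊆ L_{α+β+pf}` satisfying
`f([x,y],z) = (−1)^{|x||f|}[x,f(y,z)] + (−1)^{|y||z|}[f(x,z),y]` and
`f(x,[y,z]) = [f(x,y),z] + (−1)^{(|f|+|x|)|y|}[y,f(x,z)]` for homogeneous `x,y,z ∈ L`.
(The bilinear map is given as a bilinear map on the ambient space `End Λ(n)`;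
only its restriction to `L` is relevant.) -/
structure IsSuperBider (L : Submodule ℂ (E n)) (pf : ZMod 2)
    (f : E n →ₗ[ℂ] E n →ₗ[ℂ] E n) : Prop where
  maps : ∀ (α β : ZMod 2), ∀ x ∈ L ⊓ epar n α, ∀ y ∈ L ⊓ epar n β,
    f x y ∈ L ⊓ epar n (α + β + pf)
  eq1 : ∀ (α β γ : ZMod 2), ∀ x ∈ L ⊓ epar n α, ∀ y ∈ L ⊓ epar n β, ∀ z ∈ L ⊓ epar n γ,
    f (sbL n x y) z = sgn (α * pf) • sbL n x (f y z) + sgn (β * γ) • sbL n (f x z) y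
  eq2 : ∀ (α β γ : ZMod 2), ∀ x ∈ L ⊓ epar n α, ∀ y ∈ L ⊓ epar n β, ∀ z ∈ L ⊓ epar n γ,
    f x (sbL n y z) = sbL n (f x y) z + sgn ((pf + α) * β) • sbL n y (f x z)

/-- `D` is a superderivation of `L` of ℤ₂-degree `p`:
`D(L_α) ⊆ L_{α+p}` and `D([x,y]) = [D(x),y] + (−1)^{|D||x|}[x,D(y)]` for homogeneous
`x, y ∈ L`. (Given as a linear map on the ambient space `End Λ(n)`.) -/
structure IsSuperDer (L : Submodule ℂ (E n)) (p : ZMod 2)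
    (D : E n →ₗ[ℂ] E n) : Prop where
  maps : ∀ (α : ZMod 2), ∀ x ∈ L ⊓ epar n α, D x ∈ L ⊓ epar n (α + p)
  leib : ∀ (α β : ZMod 2), ∀ x ∈ L ⊓ epar n α, ∀ y ∈ L ⊓ epar n β,
    D (sbL n x y) = sbL n (D x) y + sgn (p * α) • sbL n x (D y)

/-- `f ∈ BDer(L)_ε`: the super-biderivation `f` has weight `ε ∈ H_L^*`, i.e.
`f(L_η, L_ζ) ⊆ L_{ε+η+ζ}` for all weights `η, ζ`. -/
def CT.HasWeight (t : CT) (n : ℕ) (f : E n →ₗ[ℂ] E n →ₗ[ℂ] E n)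
    (ε : Module.Dual ℂ (t.cartan n)) : Prop :=
  ∀ (η ζ : Module.Dual ℂ (t.cartan n)),
    ∀ x ∈ wtsp t n (t.algebra n) η, ∀ y ∈ wtsp t n (t.algebra n) ζ,
      f x y ∈ wtsp t n (t.algebra n) (ε + η + ζ)

/-- `f ∈ BDer(L)_i`: the super-biderivation `f` has ℤ-degree `i`, i.e.
`f(L_j, L_k) ⊆ L_{i+j+k}` for all `j, k ∈ ℤ`. -/
def CT.HasDeg (t : CT) (n : ℕ) (f : E n →ₗ[ℂ] E n →ₗ[ℂ] E n) (i : ℤ) : Prop :=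
  ∀ (j k : ℤ), ∀ x ∈ t.grade n j, ∀ y ∈ t.grade n k, f x y ∈ t.grade n (i + j + k)

/-!
For fixed `x`, `f(x, ·)` is a superderivation, and a superderivation of `H(n)` whose values commute
with every `∂_k` vanishes. Since `[∂_k, D_H(x_S)] = D_H(∂_k x_S)`, induction on `S` shows that a
super-biderivation is determined by the maps `f(∂_k, ·)`.

Expanding `f([∂_j, ∂_i], z) = 0` gives `[∂_j, f(∂_i, z)] = -[∂_i, f(∂_j, z)]`; in particular the
values of `D = f(∂_i, ·)` commute with `∂_i`. Let `i' ≠ i` and `h = D_H(x_i x_{i'})`. The Leibniz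
rule forces `D(h)` to be a multiple of `∂_i`, so that subtracting a multiple of `ad ∂_i` from `D`
kills `h`; what remains preserves the weights of `h`, and comparing weights of `D_H(x_i x_k)` shows
that it vanishes. Hence `f(∂_i, ·) = c_i ad ∂_i`. The antisymmetry relation makes all `c_i` equal,
and it also settles the index with `i' = i`, which exists for odd `n` only.
-/

section

variable {n}

lemma msign_zero : msign 0 = 1 := pow_zero _

lemma msign_succ (k : ℕ) : msign (k + 1) = -msign k := by simp [msign, pow_succ]

lemma msign_add (k l : ℕ) : msign (k + l) = msign k * msign l := pow_add _ _ _

lemma msign_mul_self (k : ℕ) : msign k * msign k = 1 := by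
  rw [← msign_add, ← two_mul]; simp [msign]

lemma msign_ne_zero (k : ℕ) : msign k ≠ 0 := pow_ne_zero _ (by norm_num)

lemma pd_apply (i : Fin n) (f : Lambda n) (S : Finset (Fin n)) :
    pd n i f S = if i ∈ S then 0 else msign (S.filter (· < i)).card * f (insert i S) := rfl

lemma par_apply (f : Lambda n) (S : Finset (Fin n)) : par n f S = msign S.card * f S := rfl

lemma mulOp_apply (f g : Lambda n) (U : Finset (Fin n)) :
    mulOp n f g U = ∑ S ∈ U.powerset, msign (inversions n S (U \ S)) * f S * g (U \ S) := rfl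

lemma card_filter_insert_of_notMem {S : Finset (Fin n)} {k : Fin n} (hk : k ∉ S)
    (p : Fin n → Prop) [DecidablePred p] :
    ((insert k S).filter p).card = (S.filter p).card + if p k then 1 else 0 := by
  rw [Finset.filter_insert]
  split_ifs
  · exact Finset.card_insert_of_notMem (by simp [hk])
  · rfl

lemma pd_pd_comm_of_lt {k l : Fin n} (hkl : k < l) (f : Lambda n) :
    pd n k (pd n l f) = -pd n l (pd n k f) := by
  funext S
  simp only [pd_apply, Pi.neg_apply, Finset.mem_insert]
  by_cases hk : k ∈ S
  · simp [hk]
  by_cases hl : l ∈ S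
  · simp [hl]
  simp only [hk, hl, hkl.ne, hkl.ne', or_false, if_false]
  rw [card_filter_insert_of_notMem hk, card_filter_insert_of_notMem hl, Finset.insert_comm l k]
  simp only [hkl, hkl.asymm, if_true, if_false, msign_succ, add_zero]
  ring

lemma pd_pd_self (k : Fin n) (f : Lambda n) : pd n k (pd n k f) = 0 := by
  funext S; simp [pd_apply]

lemma pd_pd_comm (k l : Fin n) (f : Lambda n) : pd n k (pd n l f) = -pd n l (pd n k f) := by
  rcases lt_trichotomy k l with h | rfl | h
  · exact pd_pd_comm_of_lt h f
  · rw [pd_pd_self, neg_zero]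
  · rw [pd_pd_comm_of_lt h f, neg_neg]

lemma par_par (f : Lambda n) : par n (par n f) = f := by
  funext S; simp only [par_apply, ← mul_assoc, msign_mul_self, one_mul]

lemma par_pd (k : Fin n) (f : Lambda n) : par n (pd n k f) = -pd n k (par n f) := by
  funext S
  simp only [par_apply, pd_apply, Pi.neg_apply]
  split_ifs with h
  · simp
  · rw [Finset.card_insert_of_notMem h, msign_succ]; ring

lemma inversions_insert_left {S : Finset (Fin n)} {k : Fin n} (hk : k ∉ S)
    (T : Finset (Fin n)) :
    inversions n (insert k S) T = inversions n S T + (T.filter (· < k)).card := by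
  simp only [inversions, Finset.card_filter, Finset.sum_product, Finset.sum_insert hk, add_comm]

lemma inversions_insert_right {T : Finset (Fin n)} {k : Fin n} (hk : k ∉ T)
    (S : Finset (Fin n)) :
    inversions n S (insert k T) = inversions n S T + (S.filter (k < ·)).card := by
  simp only [inversions, Finset.card_filter, Finset.sum_product_right, Finset.sum_insert hk,
    add_comm]

lemma card_eq_card_filter_lt_add_card_filter_gt {S : Finset (Fin n)} {k : Fin n} (hk : k ∉ S) :
    S.card = (S.filter (· < k)).card + (S.filter (k < ·)).card := by
  rw [← Finset.card_filter_add_card_filter_not (s := S) (p := (· < k))]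
  congr 2
  refine Finset.filter_congr fun x hx => ?_
  rw [not_lt, le_iff_lt_or_eq, or_iff_left]
  rintro rfl
  exact hk hx

lemma card_filter_add_card_filter_sdiff {S U : Finset (Fin n)} (h : S ⊆ U)
    (p : Fin n → Prop) [DecidablePred p] :
    (S.filter p).card + ((U \ S).filter p).card = (U.filter p).card := by
  rw [← Finset.card_union_of_disjoint, ← Finset.filter_union, Finset.union_sdiff_of_subset h]
  exact Finset.disjoint_filter_filter Finset.disjoint_sdiff

-- Both sides are sums over `S ⊆ W`; the terms in which `x_k` comes from the left factor cancel
-- against those in which it comes from the right one.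
lemma pd_mulOp_apply_insert (k : Fin n) (u v : Lambda n) {W : Finset (Fin n)} (hW : k ∉ W) :
    mulOp n (pd n k u) v (insert k W) + mulOp n (par n u) (pd n k v) (insert k W) = 0 := by
  rw [mulOp_apply, mulOp_apply, Finset.sum_powerset_insert hW, Finset.sum_powerset_insert hW,
    add_add_add_comm, ← Finset.sum_add_distrib, ← Finset.sum_add_distrib,
    ← Finset.sum_add_distrib]
  refine Finset.sum_eq_zero fun S hS => ?_
  have hkS : k ∉ S := fun h => hW (Finset.mem_powerset.1 hS h)
  have hkWS : k ∉ W \ S := fun h => hW (Finset.mem_sdiff.1 h).1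
  have hsdiff : insert k W \ insert k S = W \ S := by
    rw [Finset.insert_sdiff_insert, Finset.sdiff_insert_of_notMem hW]
  simp only [Finset.insert_sdiff_of_notMem _ hkS, hsdiff, pd_apply, par_apply,
    Finset.mem_insert_self, if_true, hkS, if_false, hkWS, mul_zero, zero_mul, add_zero, zero_add]
  rw [inversions_insert_left hkS, inversions_insert_right hkWS,
    Finset.card_insert_of_notMem hkS, msign_succ, card_eq_card_filter_lt_add_card_filter_gt hkS]
  simp only [msign_add]
  linear_combination (-msign (inversions n S (W \ S)) * msign (S.filter (· < k)).card *
    msign (S.filter (k < ·)).card * u (insert k S) * v (insert k (W \ S))) *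
      msign_mul_self ((W \ S).filter (· < k)).card

lemma pd_mulOp_apply_of_notMem {k : Fin n} (u v : Lambda n) {U : Finset (Fin n)} (hk : k ∉ U) :
    pd n k (mulOp n u v) U =
      mulOp n (pd n k u) v U + mulOp n (par n u) (pd n k v) U := by
  rw [pd_apply, if_neg hk, mulOp_apply, mulOp_apply, mulOp_apply, Finset.sum_powerset_insert hk,
    ← Finset.sum_add_distrib, ← Finset.sum_add_distrib, Finset.mul_sum]
  refine Finset.sum_congr rfl fun S hS => ?_
  have hSU := Finset.mem_powerset.1 hS
  have hkS : k ∉ S := fun h => hk (hSU h)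
  have hkUS : k ∉ U \ S := fun h => hk (Finset.mem_sdiff.1 h).1
  have hsdiff : insert k U \ insert k S = U \ S := by
    rw [Finset.insert_sdiff_insert, Finset.sdiff_insert_of_notMem hk]
  rw [hsdiff, Finset.insert_sdiff_of_notMem _ hkS, inversions_insert_left hkS,
    inversions_insert_right hkUS, ← card_filter_add_card_filter_sdiff hSU, pd_apply, pd_apply,
    if_neg hkS, if_neg hkUS, par_apply, card_eq_card_filter_lt_add_card_filter_gt hkS]
  simp only [msign_add]
  linear_combination (msign (inversions n S (U \ S)) * msign (S.filter (· < k)).card *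
    u (insert k S) * v (U \ S)) * msign_mul_self ((U \ S).filter (· < k)).card

lemma pd_mulOp (k : Fin n) (u v : Lambda n) :
    pd n k (mulOp n u v) = mulOp n (pd n k u) v + mulOp n (par n u) (pd n k v) := by
  funext U
  by_cases hk : k ∈ U
  · rw [pd_apply, if_pos hk, ← Finset.insert_erase hk, Pi.add_apply,
      pd_mulOp_apply_insert k u v (Finset.notMem_erase k U)]
  · exact pd_mulOp_apply_of_notMem u v hk

lemma par_mulOp (u v : Lambda n) : par n (mulOp n u v) = mulOp n (par n u) (par n v) := by
  funext U
  simp only [par_apply, mulOp_apply, Finset.mul_sum]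
  refine Finset.sum_congr rfl fun S hS => ?_
  rw [← Finset.card_sdiff_add_card_eq_card (Finset.mem_powerset.1 hS), msign_add]
  ring

lemma mono_self (S : Finset (Fin n)) : mono n S S = 1 := if_pos rfl

lemma mono_apply_of_ne {S T : Finset (Fin n)} (h : T ≠ S) : mono n S T = 0 := if_neg h

lemma mono_eq_basisFun (S : Finset (Fin n)) : mono n S = Pi.basisFun ℂ (Finset (Fin n)) S := by
  funext T; simp [mono, Pi.single_apply]

lemma sum_smul_mono (f : Lambda n) : ∑ S, f S • mono n S = f := by
  simpa only [mono_eq_basisFun, Pi.basisFun_repr] using (Pi.basisFun ℂ (Finset (Fin n))).sum_repr f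

lemma linearMap_ext_mono {M : Type*} [AddCommGroup M] [Module ℂ M] {L L' : Lambda n →ₗ[ℂ] M}
    (h : ∀ S, L (mono n S) = L' (mono n S)) : L = L' :=
  (Pi.basisFun ℂ (Finset (Fin n))).ext fun S => mono_eq_basisFun S ▸ h S

lemma par_mono (S : Finset (Fin n)) : par n (mono n S) = msign S.card • mono n S := by
  funext T
  by_cases h : T = S
  · rw [h]; rfl
  · simp [par_apply, mono_apply_of_ne h]

lemma pd_mono_of_notMem {i : Fin n} {S : Finset (Fin n)} (h : i ∉ S) : pd n i (mono n S) = 0 := by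
  funext T
  have hT : insert i T ≠ S := fun e => h (e ▸ Finset.mem_insert_self i T)
  simp [pd_apply, mono_apply_of_ne hT]

lemma pd_mono_of_mem {i : Fin n} {S : Finset (Fin n)} (h : i ∈ S) :
    pd n i (mono n S) = msign ((S.erase i).filter (· < i)).card • mono n (S.erase i) := by
  funext T
  rw [pd_apply, Pi.smul_apply, smul_eq_mul]
  by_cases hT : T = S.erase i
  · rw [hT, if_neg (Finset.notMem_erase i S), Finset.insert_erase h, mono_self, mono_self]
  rw [mono_apply_of_ne hT, mul_zero]
  split_ifs with hiT
  · rfl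
  · rw [mono_apply_of_ne fun e => hT (by rw [← e, Finset.erase_insert hiT]), mul_zero]

lemma pd_apply_empty (k : Fin n) (f : Lambda n) : pd n k f ∅ = f {k} := by
  simp [pd_apply, msign_zero]

lemma apply_eq_zero_of_pd_eq_zero {f : Lambda n} {S : Finset (Fin n)} {k : Fin n}
    (h : pd n k f = 0) (hk : k ∈ S) : f S = 0 := by
  have := congrFun h (S.erase k)
  rw [pd_apply, if_neg (Finset.notMem_erase _ _), Finset.insert_erase hk] at this
  exact (mul_eq_zero.1 this).resolve_left (msign_ne_zero _)

lemma mulOp_mono_empty (f : Lambda n) : mulOp n f (mono n ∅) = f := by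
  funext U
  rw [mulOp_apply, Finset.sum_eq_single U]
  · simp [mono_self, inversions, msign_zero]
  · intro S hS hSU
    rw [mono_apply_of_ne, mul_zero]
    exact fun h => hSU ((Finset.mem_powerset.1 hS).antisymm (Finset.sdiff_eq_empty_iff_subset.1 h))
  · exact fun h => absurd (Finset.mem_powerset_self U) h

lemma mulOp_mono_apply (S : Finset (Fin n)) (g : Lambda n) (U : Finset (Fin n)) :
    mulOp n (mono n S) g U = if S ⊆ U then msign (inversions n S (U \ S)) * g (U \ S) else 0 := by
  rw [mulOp_apply]
  split_ifs with h
  · rw [Finset.sum_eq_single_of_mem S (Finset.mem_powerset.2 h) fun R _ hR => by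
      rw [mono_apply_of_ne hR, mul_zero, zero_mul], mono_self, mul_one]
  · refine Finset.sum_eq_zero fun R hR => ?_
    rw [mono_apply_of_ne (by rintro rfl; exact h (Finset.mem_powerset.1 hR)), mul_zero, zero_mul]

lemma mulOp_mono_mono_of_disjoint {S T : Finset (Fin n)} (h : Disjoint S T) :
    mulOp n (mono n S) (mono n T) = msign (inversions n S T) • mono n (S ∪ T) := by
  funext U
  rw [mulOp_mono_apply, Pi.smul_apply, smul_eq_mul]
  by_cases hU : U = S ∪ T
  · rw [hU, if_pos Finset.subset_union_left, Finset.union_sdiff_cancel_left h, mono_self, mono_self]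
  rw [mono_apply_of_ne hU, mul_zero]
  split_ifs with hS
  · rw [mono_apply_of_ne, mul_zero]
    rintro rfl
    exact hU (Finset.union_sdiff_of_subset hS).symm
  · rfl

lemma mulOp_mono_mono_of_not_disjoint {S T : Finset (Fin n)} (h : ¬ Disjoint S T) :
    mulOp n (mono n S) (mono n T) = 0 := by
  funext U
  rw [mulOp_mono_apply, mono_apply_of_ne, mul_zero, ite_self, Pi.zero_apply]
  rintro rfl
  exact h Finset.disjoint_sdiff

lemma mulOp_mono_singleton_pd_apply (i : Fin n) (f : Lambda n) (S : Finset (Fin n)) :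
    mulOp n (mono n {i}) (pd n i f) S = if i ∈ S then f S else 0 := by
  simp only [mulOp_mono_apply, Finset.singleton_subset_iff, Finset.sdiff_singleton_eq_erase]
  refine if_ctx_congr Iff.rfl (fun h => ?_) fun _ => rfl
  have hinv : inversions n {i} (S.erase i) = ((S.erase i).filter (· < i)).card := by
    simpa [inversions] using inversions_insert_left (Finset.notMem_empty i) (S.erase i)
  rw [pd_apply, if_neg (Finset.notMem_erase i S), Finset.insert_erase h, hinv, ← mul_assoc,
    msign_mul_self, one_mul]

lemma cidx_cidx (i : Fin n) : cidx n (cidx n i) = i := by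
  apply Fin.ext
  simp only [cidx]
  have := i.isLt
  split_ifs <;> omega

lemma cidx_involutive : Function.Involutive (cidx n) := cidx_cidx

lemma sgn_zero : sgn 0 = 1 := by simp [sgn]

lemma sgn_one : sgn 1 = -1 := by simp [sgn, ZMod.val_one]

lemma zmod_two_cases (a : ZMod 2) : a = 0 ∨ a = 1 := by revert a; decide

lemma sgn_add (a b : ZMod 2) : sgn (a + b) = sgn a * sgn b := by
  rcases zmod_two_cases a with rfl | rfl <;> rcases zmod_two_cases b with rfl | rfl <;>
    simp [sgn_zero, sgn_one, CharTwo.add_self_eq_zero]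

lemma sgn_mul_self (a : ZMod 2) : sgn a * sgn a = 1 := by
  rw [← sgn_add, CharTwo.add_self_eq_zero, sgn_zero]

lemma sgn_ne_zero (a : ZMod 2) : sgn a ≠ 0 := left_ne_zero_of_mul_eq_one (sgn_mul_self a)

lemma sgn_injective : Function.Injective sgn := by
  intro a b h
  rcases zmod_two_cases a with rfl | rfl <;> rcases zmod_two_cases b with rfl | rfl
  · rfl
  · norm_num [sgn_zero, sgn_one] at h
  · norm_num [sgn_zero, sgn_one] at h
  · rfl

lemma sgn_natCast (k : ℕ) : sgn (k : ZMod 2) = msign k := by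
  induction k with
  | zero => simp [sgn_zero, msign_zero]
  | succ k ih => rw [Nat.cast_succ, sgn_add, ih, sgn_one, msign_succ]; ring

lemma mem_lpar_iff {q : ZMod 2} {f : Lambda n} : f ∈ lpar n q ↔ par n f = sgn q • f := by
  rw [funext_iff]
  refine forall_congr' fun S => ?_
  rw [par_apply, Pi.smul_apply, smul_eq_mul, mul_eq_mul_right_iff, ← sgn_natCast,
    sgn_injective.eq_iff, ← or_iff_not_imp_left]

lemma mono_mem_lpar (S : Finset (Fin n)) : mono n S ∈ lpar n (S.card : ZMod 2) :=
  mem_lpar_iff.2 (by rw [par_mono, sgn_natCast])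

lemma mem_epar_iff {α : ZMod 2} {D : E n} : D ∈ epar n α ↔ par n * D * par n = sgn α • D := by
  constructor
  · intro hD
    refine linearMap_ext_mono fun S => ?_
    have hS := mono_mem_lpar S
    rw [Module.End.mul_apply, Module.End.mul_apply, LinearMap.smul_apply, mem_lpar_iff.1 hS,
      map_smul, map_smul, mem_lpar_iff.1 (hD _ _ hS), smul_smul, sgn_add, ← mul_assoc,
      sgn_mul_self, one_mul]
  · intro h q f hf
    have hD := LinearMap.congr_fun h (par n f)
    rw [Module.End.mul_apply, Module.End.mul_apply, LinearMap.smul_apply, par_par,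
      mem_lpar_iff.1 hf, map_smul, smul_smul] at hD
    rw [mem_lpar_iff, hD, sgn_add, mul_comm]

lemma eq_of_mem_epar {α β : ZMod 2} {D : E n} (hα : D ∈ epar n α) (hβ : D ∈ epar n β)
    (hD : D ≠ 0) : α = β :=
  sgn_injective (smul_left_injective ℂ hD ((mem_epar_iff.1 hα).symm.trans (mem_epar_iff.1 hβ)))

lemma mul_mem_epar {α β : ZMod 2} {D F : E n} (hD : D ∈ epar n α) (hF : F ∈ epar n β) :
    D * F ∈ epar n (α + β) := by
  intro q f hf
  rw [add_comm α β, ← add_assoc]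
  exact hD _ _ (hF _ _ hf)

lemma sbL_eq_of_mem_epar {α β : ZMod 2} {D F : E n} (hD : D ∈ epar n α) (hF : F ∈ epar n β) :
    sbL n D F = D * F - sgn (α * β) • (F * D) := by
  change sbFun n D F = _
  rw [sbFun, mem_epar_iff.1 hD, mem_epar_iff.1 hF]
  rcases zmod_two_cases α with rfl | rfl <;> rcases zmod_two_cases β with rfl | rfl <;>
    simp only [sgn_zero, sgn_one, mul_zero, mul_one, add_mul, sub_mul,
      smul_mul_assoc, mul_smul_comm] <;> module

lemma sbL_mem_epar {α β : ZMod 2} {D F : E n} (hD : D ∈ epar n α) (hF : F ∈ epar n β) :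
    sbL n D F ∈ epar n (α + β) := by
  rw [sbL_eq_of_mem_epar hD hF]
  exact sub_mem (mul_mem_epar hD hF) (Submodule.smul_mem _ _ (add_comm β α ▸ mul_mem_epar hF hD))

lemma sbL_skew {α β : ZMod 2} {D F : E n} (hD : D ∈ epar n α) (hF : F ∈ epar n β) :
    sbL n D F = (-sgn (α * β)) • sbL n F D := by
  rw [sbL_eq_of_mem_epar hD hF, sbL_eq_of_mem_epar hF hD, mul_comm β α, smul_sub, smul_smul,
    neg_mul, sgn_mul_self]
  module

lemma sbL_leibniz {α β γ : ZMod 2} {x y z : E n} (hx : x ∈ epar n α) (hy : y ∈ epar n β)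
    (hz : z ∈ epar n γ) :
    sbL n x (sbL n y z) = sbL n (sbL n x y) z + sgn (α * β) • sbL n y (sbL n x z) := by
  rw [sbL_eq_of_mem_epar hx (sbL_mem_epar hy hz), sbL_eq_of_mem_epar (sbL_mem_epar hx hy) hz,
    sbL_eq_of_mem_epar hy (sbL_mem_epar hx hz), sbL_eq_of_mem_epar hy hz,
    sbL_eq_of_mem_epar hx hz, sbL_eq_of_mem_epar hx hy]
  simp only [add_mul α β γ, mul_add, sgn_add, mul_comm β α, mul_sub, sub_mul, smul_mul_assoc,
    mul_smul_comm, smul_sub, smul_smul, mul_assoc]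
  rcases mul_self_eq_one_iff.1 (sgn_mul_self (α * β)) with h | h <;> rw [h] <;> module

lemma DHmap_apply (a v : Lambda n) :
    DHmap n a v = ∑ i, mulOp n (pd n i (par n a)) (pd n (cidx n i) v) :=
  LinearMap.sum_apply _ _ _

lemma pd_mem_epar (k : Fin n) : pd n k ∈ epar n 1 := by
  refine mem_epar_iff.2 (LinearMap.ext fun f => ?_)
  simp [par_pd, par_par, sgn_one]

lemma par_DHmap (a v : Lambda n) : par n (DHmap n a v) = DHmap n (par n a) (par n v) := by
  rw [DHmap_apply, DHmap_apply, map_sum]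
  refine Finset.sum_congr rfl fun i _ => ?_
  rw [par_mulOp, par_pd, par_pd, map_neg, map_neg, LinearMap.neg_apply, neg_neg]

lemma DHmap_mem_epar {q : ZMod 2} {a : Lambda n} (ha : a ∈ lpar n q) : DHmap n a ∈ epar n q := by
  refine mem_epar_iff.2 (LinearMap.ext fun v => ?_)
  rw [Module.End.mul_apply, Module.End.mul_apply, par_DHmap, par_par, mem_lpar_iff.1 ha, map_smul]

lemma DHmap_mono_mem_epar (S : Finset (Fin n)) :
    DHmap n (mono n S) ∈ epar n (S.card : ZMod 2) :=
  DHmap_mem_epar (mono_mem_lpar S)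

lemma pd_DHmap (k : Fin n) (a v : Lambda n) :
    pd n k (DHmap n a v) = DHmap n (pd n k a) v + DHmap n (par n a) (pd n k v) := by
  simp only [DHmap_apply, map_sum, ← Finset.sum_add_distrib]
  refine Finset.sum_congr rfl fun i _ => ?_
  rw [pd_mulOp, pd_pd_comm k i, par_pd i, par_pd k, pd_pd_comm k (cidx n i)]
  simp only [map_neg, LinearMap.neg_apply, neg_neg]

lemma sbL_pd_DHmap (k : Fin n) (a : Lambda n) :
    sbL n (pd n k) (DHmap n a) = DHmap n (pd n k a) := by
  suffices sbL n (pd n k) ∘ₗ DHmap n = DHmap n ∘ₗ pd n k from LinearMap.congr_fun this a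
  refine linearMap_ext_mono fun S => LinearMap.ext fun v => ?_
  rw [LinearMap.comp_apply, sbL_eq_of_mem_epar (pd_mem_epar k) (DHmap_mono_mem_epar S)]
  simp only [LinearMap.comp_apply, LinearMap.sub_apply, Module.End.mul_apply,
    LinearMap.smul_apply, one_mul, pd_DHmap, mem_lpar_iff.1 (mono_mem_lpar S), map_smul,
    add_sub_cancel_right]

lemma sbL_DHmap_pd (a : Lambda n) (k : Fin n) :
    sbL n (DHmap n a) (pd n k) = -DHmap n (pd n k (par n a)) := by
  suffices (sbL n).flip (pd n k) ∘ₗ DHmap n = -(DHmap n ∘ₗ pd n k ∘ₗ par n) from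
    LinearMap.congr_fun this a
  refine linearMap_ext_mono fun S => ?_
  simp only [LinearMap.comp_apply, LinearMap.flip_apply, LinearMap.neg_apply]
  rw [sbL_skew (DHmap_mono_mem_epar S) (pd_mem_epar k), sbL_pd_DHmap, mul_one, par_mono,
    sgn_natCast, map_smul, map_smul]
  module

lemma DHmap_mono_empty : DHmap n (mono n ∅) = 0 := by
  refine LinearMap.ext fun v => ?_
  rw [DHmap_apply]
  refine Finset.sum_eq_zero fun i _ => ?_
  rw [par_mono, map_smul, pd_mono_of_notMem (Finset.notMem_empty i), smul_zero, map_zero,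
    LinearMap.zero_apply]

lemma DHmap_apply_mono_empty (a : Lambda n) : DHmap n a (mono n ∅) = 0 := by
  rw [DHmap_apply]
  refine Finset.sum_eq_zero fun i _ => ?_
  rw [pd_mono_of_notMem (Finset.notMem_empty _), map_zero]

lemma DHmap_apply_mono_singleton (a : Lambda n) (k : Fin n) :
    DHmap n a (mono n {k}) = pd n (cidx n k) (par n a) := by
  rw [DHmap_apply, Finset.sum_eq_single (cidx n k)]
  · rw [cidx_cidx, pd_mono_of_mem (Finset.mem_singleton_self k)]
    simp [msign_zero, mulOp_mono_empty]
  · intro i _ hi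
    rw [pd_mono_of_notMem, map_zero]
    rw [Finset.mem_singleton]
    rintro rfl
    exact hi (cidx_cidx i).symm
  · exact fun h => absurd (Finset.mem_univ _) h

lemma DHmap_mono_singleton (j : Fin n) : DHmap n (mono n {j}) = -pd n (cidx n j) := by
  refine LinearMap.ext fun v => ?_
  rw [DHmap_apply, Finset.sum_eq_single j]
  · funext U
    rw [par_mono, map_smul, pd_mono_of_mem (Finset.mem_singleton_self j)]
    simp [msign, mulOp_mono_apply, inversions]
  · intro i _ hi
    rw [par_mono, map_smul, pd_mono_of_notMem (by simpa using hi), smul_zero, map_zero,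
      LinearMap.zero_apply]
  · exact fun h => absurd (Finset.mem_univ _) h

lemma pd_eq_neg_DHmap (k : Fin n) : pd n k = -DHmap n (mono n {cidx n k}) := by
  rw [DHmap_mono_singleton, cidx_cidx, neg_neg]

lemma DHmap_eq_zero_iff {a : Lambda n} : DHmap n a = 0 ↔ ∀ S, S.Nonempty → a S = 0 := by
  constructor
  · rintro h S ⟨k, hk⟩
    have hpd : pd n k (par n a) = 0 := by
      rw [← cidx_cidx k, ← DHmap_apply_mono_singleton, h, LinearMap.zero_apply]
    have := apply_eq_zero_of_pd_eq_zero hpd hk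
    exact (mul_eq_zero.1 this).resolve_left (msign_ne_zero _)
  · intro h
    have ha : a = a ∅ • mono n ∅ := by
      funext S
      obtain rfl | hS := S.eq_empty_or_nonempty
      · simp [mono_self]
      · simp [h S hS, mono_apply_of_ne hS.ne_empty]
    rw [ha, map_smul, DHmap_mono_empty, smul_zero]

lemma DHmap_apply_empty (a v : Lambda n) :
    DHmap n a v ∅ = ∑ i, par n a {i} * v {cidx n i} := by
  rw [DHmap_apply, Finset.sum_apply]
  refine Finset.sum_congr rfl fun i _ => ?_
  simp [mulOp_apply, inversions, msign_zero, pd_apply_empty]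

lemma DHmap_apply_empty_of_left {a : Lambda n} (ha : ∀ k, a {k} = 0) (v : Lambda n) :
    DHmap n a v ∅ = 0 := by
  rw [DHmap_apply_empty]
  exact Finset.sum_eq_zero fun i _ => by rw [par_apply, ha, mul_zero, zero_mul]

lemma DHmap_apply_empty_of_right (a : Lambda n) {v : Lambda n} (hv : ∀ k, v {k} = 0) :
    DHmap n a v ∅ = 0 := by
  rw [DHmap_apply_empty]
  exact Finset.sum_eq_zero fun i _ => by rw [hv, mul_zero]

lemma pd_apply_of_sbL_pd_eq_zero {q : ZMod 2} {Y : E n} (hY : Y ∈ epar n q) {k : Fin n}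
    (h : sbL n (pd n k) Y = 0) (v : Lambda n) : pd n k (Y v) = sgn q • Y (pd n k v) := by
  rw [sbL_eq_of_mem_epar (pd_mem_epar k) hY, one_mul, sub_eq_zero] at h
  exact LinearMap.congr_fun h v

-- An operator supercommuting with all `∂_k` is determined by the constant terms of its values.
lemma eq_zero_of_sbL_pd_eq_zero {q : ZMod 2} {Y : E n} (hY : Y ∈ epar n q)
    (hpd : ∀ k, sbL n (pd n k) Y = 0) (hconst : ∀ v, Y v ∅ = 0) : Y = 0 := by
  refine linearMap_ext_mono fun U => ?_
  induction U using Finset.strongInduction with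
  | H U ih =>
    funext V
    obtain rfl | ⟨k, hk⟩ := V.eq_empty_or_nonempty
    · exact hconst _
    refine apply_eq_zero_of_pd_eq_zero ?_ hk
    rw [pd_apply_of_sbL_pd_eq_zero hY (hpd k)]
    by_cases hkU : k ∈ U
    · rw [pd_mono_of_mem hkU, map_smul, ih _ (Finset.erase_ssubset hkU), LinearMap.zero_apply,
        smul_zero, smul_zero]
    · rw [pd_mono_of_notMem hkU, map_zero, smul_zero]

lemma mono_apply_singleton_of_two_le_card {S : Finset (Fin n)} (h : 2 ≤ S.card) (k : Fin n) :
    mono n S {k} = 0 := by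
  refine mono_apply_of_ne ?_
  rintro rfl
  rw [Finset.card_singleton] at h
  omega

lemma sbL_DHmap_mono_of_card_lt_two_left {S : Finset (Fin n)} (hS : S.card < 2) (b : Lambda n) :
    sbL n (DHmap n (mono n S)) (DHmap n b) = DHmap n (DHmap n (mono n S) b) := by
  obtain h | h : S.card = 0 ∨ S.card = 1 := by omega
  · obtain rfl := Finset.card_eq_zero.1 h
    simp [DHmap_mono_empty]
  · obtain ⟨j, rfl⟩ := Finset.card_eq_one.1 h
    rw [DHmap_mono_singleton, map_neg, LinearMap.neg_apply, sbL_pd_DHmap, LinearMap.neg_apply,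
      map_neg]

lemma sbL_DHmap_mono_of_card_lt_two_right {T : Finset (Fin n)} (hT : T.card < 2) (a : Lambda n) :
    sbL n (DHmap n a) (DHmap n (mono n T)) = DHmap n (DHmap n a (mono n T)) := by
  obtain h | h : T.card = 0 ∨ T.card = 1 := by omega
  · obtain rfl := Finset.card_eq_zero.1 h
    rw [DHmap_mono_empty, map_zero, DHmap_apply_mono_empty, map_zero]
  · obtain ⟨j, rfl⟩ := Finset.card_eq_one.1 h
    rw [DHmap_mono_singleton, map_neg, sbL_DHmap_pd, neg_neg, DHmap_apply_mono_singleton]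

lemma sbL_pd_sbL_DHmap_mono_sub {S T : Finset (Fin n)} (k : Fin n) :
    sbL n (pd n k) (sbL n (DHmap n (mono n S)) (DHmap n (mono n T)) -
        DHmap n (DHmap n (mono n S) (mono n T))) =
      sbL n (DHmap n (pd n k (mono n S))) (DHmap n (mono n T)) -
          DHmap n (DHmap n (pd n k (mono n S)) (mono n T)) +
        msign S.card • (sbL n (DHmap n (mono n S)) (DHmap n (pd n k (mono n T))) -
          DHmap n (DHmap n (mono n S) (pd n k (mono n T)))) := by
  rw [map_sub, sbL_leibniz (pd_mem_epar k) (DHmap_mono_mem_epar S) (DHmap_mono_mem_epar T),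
    sbL_pd_DHmap, sbL_pd_DHmap, sbL_pd_DHmap, pd_DHmap, par_mono, one_mul, sgn_natCast]
  simp only [map_add, map_smul, LinearMap.smul_apply]
  module

lemma sbL_DHmap_mono_apply_empty {S T : Finset (Fin n)} (hS : 2 ≤ S.card) (hT : 2 ≤ T.card)
    (v : Lambda n) : sbL n (DHmap n (mono n S)) (DHmap n (mono n T)) v ∅ = 0 := by
  rw [sbL_eq_of_mem_epar (DHmap_mono_mem_epar S) (DHmap_mono_mem_epar T)]
  simp only [LinearMap.sub_apply, Module.End.mul_apply, LinearMap.smul_apply, Pi.sub_apply,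
    Pi.smul_apply, DHmap_apply_empty_of_left (mono_apply_singleton_of_two_le_card hS),
    DHmap_apply_empty_of_left (mono_apply_singleton_of_two_le_card hT), smul_zero, sub_zero]

lemma DHmap_mono_mono_apply_singleton {S T : Finset (Fin n)} (hS : 2 ≤ S.card) (hT : 2 ≤ T.card)
    (k : Fin n) : DHmap n (mono n S) (mono n T) {k} = 0 := by
  rw [← pd_apply_empty k (DHmap n _ _), pd_DHmap, Pi.add_apply, par_mono, map_smul,
    LinearMap.smul_apply, Pi.smul_apply,
    DHmap_apply_empty_of_right _ (mono_apply_singleton_of_two_le_card hT),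
    DHmap_apply_empty_of_left (mono_apply_singleton_of_two_le_card hS), smul_zero, add_zero]

lemma sbL_DHmap_mono (S T : Finset (Fin n)) :
    sbL n (DHmap n (mono n S)) (DHmap n (mono n T)) = DHmap n (DHmap n (mono n S) (mono n T)) := by
  induction h : S.card + T.card using Nat.strong_induction_on generalizing S T with
  | _ m ih =>
  obtain hS | hS := lt_or_ge S.card 2
  · exact sbL_DHmap_mono_of_card_lt_two_left hS _
  obtain hT | hT := lt_or_ge T.card 2
  · exact sbL_DHmap_mono_of_card_lt_two_right hT _
  have hDD : DHmap n (mono n S) (mono n T) ∈ lpar n ((S.card : ZMod 2) + T.card) :=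
    add_comm (T.card : ZMod 2) S.card ▸ DHmap_mono_mem_epar S _ _ (mono_mem_lpar T)
  refine sub_eq_zero.1 (eq_zero_of_sbL_pd_eq_zero
    (sub_mem (sbL_mem_epar (DHmap_mono_mem_epar S) (DHmap_mono_mem_epar T)) (DHmap_mem_epar hDD))
    (fun k => ?_) fun v => ?_)
  · have hleft : sbL n (DHmap n (pd n k (mono n S))) (DHmap n (mono n T)) =
        DHmap n (DHmap n (pd n k (mono n S)) (mono n T)) := by
      by_cases hk : k ∈ S
      · have hcard := Finset.card_erase_lt_of_mem hk
        rw [pd_mono_of_mem hk]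
        simp only [map_smul, LinearMap.smul_apply, ih _ (by omega) (S.erase k) T rfl]
      · simp [pd_mono_of_notMem hk]
    have hright : sbL n (DHmap n (mono n S)) (DHmap n (pd n k (mono n T))) =
        DHmap n (DHmap n (mono n S) (pd n k (mono n T))) := by
      by_cases hk : k ∈ T
      · have hcard := Finset.card_erase_lt_of_mem hk
        rw [pd_mono_of_mem hk]
        simp only [map_smul, ih _ (by omega) S (T.erase k) rfl]
      · simp [pd_mono_of_notMem hk]
    rw [sbL_pd_sbL_DHmap_mono_sub, hleft, hright, sub_self, sub_self, smul_zero, add_zero]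
  · rw [LinearMap.sub_apply, Pi.sub_apply, sbL_DHmap_mono_apply_empty hS hT,
      DHmap_apply_empty_of_left (DHmap_mono_mono_apply_singleton hS hT), sub_zero]

theorem sbL_DHmap_DHmap (a b : Lambda n) :
    sbL n (DHmap n a) (DHmap n b) = DHmap n (DHmap n a b) := by
  suffices (sbL n).compl₁₂ (DHmap n) (DHmap n) = (DHmap n).compr₂ (DHmap n) from
    LinearMap.congr_fun₂ this a b
  exact linearMap_ext_mono fun S => linearMap_ext_mono fun T => sbL_DHmap_mono S T

lemma sum_pd_pd_cidx (b : Lambda n) : ∑ i, pd n i (pd n (cidx n i) b) = 0 := by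
  refine self_eq_neg.1 ?_
  rw [← Finset.sum_neg_distrib]
  refine Fintype.sum_bijective (cidx n) cidx_involutive.bijective _ _ fun i => ?_
  rw [cidx_cidx, pd_pd_comm]

-- `D_H(a)(b)` is a sum of derivatives, as `∑ ∂_i ∂_{i'} = 0`, hence has no top component.
lemma DHmap_apply_univ (a b : Lambda n) : DHmap n a b Finset.univ = 0 := by
  have hdiv : DHmap n a b = ∑ i, pd n i (mulOp n (par n a) (pd n (cidx n i) b)) := by
    simp only [DHmap_apply, pd_mulOp, par_par, Finset.sum_add_distrib]
    rw [← map_sum, sum_pd_pd_cidx, map_zero, add_zero]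
  rw [hdiv, Finset.sum_apply]
  exact Finset.sum_eq_zero fun i _ => if_pos (Finset.mem_univ i)

lemma mem_Hn_iff {D : E n} : D ∈ Hn n ↔ ∃ a : Lambda n, a Finset.univ = 0 ∧ DHmap n a = D :=
  Iff.rfl

lemma DHmap_mono_mem_Hn {S : Finset (Fin n)} (h : S ≠ Finset.univ) : DHmap n (mono n S) ∈ Hn n :=
  mem_Hn_iff.2 ⟨_, mono_apply_of_ne h.symm, rfl⟩

lemma DHmap_mono_mem {S : Finset (Fin n)} (h : S ≠ Finset.univ) :
    DHmap n (mono n S) ∈ Hn n ⊓ epar n (S.card : ZMod 2) :=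
  ⟨DHmap_mono_mem_Hn h, DHmap_mono_mem_epar S⟩

lemma ne_univ_of_card_lt {S : Finset (Fin n)} (h : S.card < n) : S ≠ Finset.univ := by
  rintro rfl
  simp at h

lemma sbL_mem_Hn {x y : E n} (hx : x ∈ Hn n) (hy : y ∈ Hn n) : sbL n x y ∈ Hn n := by
  obtain ⟨a, _, rfl⟩ := mem_Hn_iff.1 hx
  obtain ⟨b, _, rfl⟩ := mem_Hn_iff.1 hy
  rw [sbL_DHmap_DHmap]
  exact mem_Hn_iff.2 ⟨_, DHmap_apply_univ a b, rfl⟩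

lemma pd_mem_Hn (hn : 1 < n) (k : Fin n) : pd n k ∈ Hn n := by
  rw [pd_eq_neg_DHmap]
  exact neg_mem (DHmap_mono_mem_Hn (ne_univ_of_card_lt (by simpa using hn)))

lemma pd_mem (hn : 1 < n) (k : Fin n) : pd n k ∈ Hn n ⊓ epar n 1 :=
  ⟨pd_mem_Hn hn k, pd_mem_epar k⟩

lemma eq_on_Hn {M : Type*} [AddCommMonoid M] [Module ℂ M] {L L' : E n →ₗ[ℂ] M}
    (h : ∀ S, S ≠ Finset.univ → L (DHmap n (mono n S)) = L' (DHmap n (mono n S))) {z : E n}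
    (hz : z ∈ Hn n) : L z = L' z := by
  obtain ⟨a, ha, rfl⟩ := mem_Hn_iff.1 hz
  rw [← sum_smul_mono a]
  simp only [map_sum, map_smul]
  refine Finset.sum_congr rfl fun S _ => ?_
  obtain rfl | hS := eq_or_ne S Finset.univ
  · rw [ha, zero_smul, zero_smul]
  · rw [h S hS]

lemma eq_zero_on_Hn {M : Type*} [AddCommMonoid M] [Module ℂ M] {L : E n →ₗ[ℂ] M}
    (h : ∀ S, S ≠ Finset.univ → L (DHmap n (mono n S)) = 0) {z : E n} (hz : z ∈ Hn n) :
    L z = 0 :=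
  eq_on_Hn (L' := 0) h hz

lemma exists_notMem_of_card_lt {S : Finset (Fin n)} (h : S.card < n) : ∃ k, k ∉ S := by
  simpa [Finset.eq_univ_iff_forall] using ne_univ_of_card_lt h

/-- `b` has polynomial degree at most one, so that `D_H(b)` has constant coefficients. -/
def IsAffine (b : Lambda n) : Prop := ∀ T : Finset (Fin n), 2 ≤ T.card → b T = 0

lemma apply_eq_zero_of_sbL_pd_eq_zero {b : Lambda n} {k : Fin n}
    (h : sbL n (pd n k) (DHmap n b) = 0) {S : Finset (Fin n)} (hk : k ∈ S) (hS : 2 ≤ S.card) :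
    b S = 0 := by
  rw [sbL_pd_DHmap, DHmap_eq_zero_iff] at h
  have hne : (S.erase k).Nonempty := by
    rw [← Finset.card_pos, Finset.card_erase_of_mem hk]
    omega
  have hb := h _ hne
  rw [pd_apply, if_neg (Finset.notMem_erase _ _), Finset.insert_erase hk] at hb
  exact (mul_eq_zero.1 hb).resolve_left (msign_ne_zero _)

lemma isAffine_of_sbL_pd_eq_zero {b : Lambda n} (p : Fin n)
    (h : ∀ j ≠ p, sbL n (pd n j) (DHmap n b) = 0) : IsAffine b := by
  intro T hT
  obtain ⟨j, hjT, hjp⟩ := Finset.exists_mem_ne hT p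
  exact apply_eq_zero_of_sbL_pd_eq_zero (h j hjp) hjT hT

lemma IsAffine.sbL_pd_DHmap {b : Lambda n} (hb : IsAffine b) (k : Fin n) :
    sbL n (pd n k) (DHmap n b) = 0 := by
  rw [CartanSuper.sbL_pd_DHmap, DHmap_eq_zero_iff]
  intro S hS
  rw [pd_apply]
  split_ifs with hk
  · rfl
  · have hcard := hS.card_pos
    rw [hb _ (by rw [Finset.card_insert_of_notMem hk]; omega), mul_zero]

lemma IsAffine.DHmap_eq_sum {b : Lambda n} (hb : IsAffine b) :
    DHmap n b = ∑ j, (-b {cidx n j}) • pd n j := by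
  have hzero : DHmap n (b - ∑ j, b {j} • mono n {j}) = 0 := by
    refine DHmap_eq_zero_iff.2 fun S hS => ?_
    rw [Pi.sub_apply, Finset.sum_apply, sub_eq_zero]
    obtain hcard | hcard := hS.card_pos.nat_succ_le.eq_or_lt
    · obtain ⟨j, rfl⟩ := Finset.card_eq_one.1 hcard.symm
      rw [Finset.sum_eq_single j]
      · simp [mono_self]
      · intro l _ hl
        rw [Pi.smul_apply, mono_apply_of_ne (by simpa using hl.symm), smul_zero]
      · exact fun h => absurd (Finset.mem_univ _) h
    · rw [hb S hcard, Finset.sum_eq_zero]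
      intro j _
      rw [Pi.smul_apply, mono_apply_of_ne (by rintro rfl; simp at hcard), smul_zero]
  rw [map_sub, sub_eq_zero] at hzero
  rw [hzero, map_sum]
  refine Fintype.sum_bijective (cidx n) cidx_involutive.bijective _ _ fun j => ?_
  rw [map_smul, DHmap_mono_singleton, cidx_cidx]
  module

lemma sbL_pd_eq_zero_of_forall_ne {z : E n} (hz : z ∈ Hn n) (p : Fin n)
    (h : ∀ j ≠ p, sbL n (pd n j) z = 0) (k : Fin n) : sbL n (pd n k) z = 0 := by
  obtain ⟨b, _, rfl⟩ := mem_Hn_iff.1 hz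
  exact (isAffine_of_sbL_pd_eq_zero p h).sbL_pd_DHmap k

lemma exists_eq_sum_smul_pd [NeZero n] {z : E n} (hz : z ∈ Hn n) (h : ∀ k, sbL n (pd n k) z = 0) :
    ∃ c : Fin n → ℂ, z = ∑ j, c j • pd n j := by
  obtain ⟨b, _, rfl⟩ := mem_Hn_iff.1 hz
  exact ⟨_, (isAffine_of_sbL_pd_eq_zero 0 fun j _ => h j).DHmap_eq_sum⟩

lemma sum_smul_pd_mono_apply_erase (c : Fin n → ℂ) {R : Finset (Fin n)} {j : Fin n} (hj : j ∈ R) :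
    (∑ i, c i • pd n i) (mono n R) (R.erase j) =
      c j * msign ((R.erase j).filter (· < j)).card := by
  rw [LinearMap.sum_apply, Finset.sum_apply, Finset.sum_eq_single j]
  · rw [LinearMap.smul_apply, pd_mono_of_mem hj]
    simp [mono_self]
  · intro i _ hij
    rw [LinearMap.smul_apply, Pi.smul_apply, pd_apply, mono_apply_of_ne, mul_zero, ite_self,
      smul_zero]
    intro h
    have := h.symm ▸ hj
    simp [hij.symm] at this
  · exact fun h => absurd (Finset.mem_univ _) h

lemma coeff_eq_zero_of_sbL_pd_sbL_eq_zero (c : Fin n → ℂ) {R : Finset (Fin n)} (hR : 3 ≤ R.card)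
    {j : Fin n} (hj : j ∈ R)
    (h : ∀ l, sbL n (pd n l) (sbL n (∑ i, c i • pd n i) (DHmap n (mono n R))) = 0) : c j = 0 := by
  have hV : sbL n (∑ i, c i • pd n i) (DHmap n (mono n R)) =
      DHmap n ((∑ i, c i • pd n i) (mono n R)) := by
    simp only [map_sum, map_smul, LinearMap.sum_apply, LinearMap.smul_apply, sbL_pd_DHmap]
  have haff := isAffine_of_sbL_pd_eq_zero j fun l _ => hV ▸ h l
  have := haff (R.erase j) (by rw [Finset.card_erase_of_mem hj]; omega)
  rw [sum_smul_pd_mono_apply_erase c hj] at this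
  exact (mul_eq_zero.1 this).resolve_right (msign_ne_zero _)

lemma exists_card_eq_three_mem_notMem (hn : 3 < n) {i j : Fin n} (hij : j ≠ i) :
    ∃ R : Finset (Fin n), R.card = 3 ∧ j ∈ R ∧ i ∉ R := by
  obtain ⟨R, hjR, hRi, hR⟩ := Finset.exists_subsuperset_card_eq (n := 3)
    (s := {j}) (t := Finset.univ.erase i) (by simpa using hij) (by simp)
    (by rw [Finset.card_erase_of_mem (Finset.mem_univ i), Finset.card_fin]; omega)
  exact ⟨R, hR, Finset.singleton_subset_iff.1 hjR, fun h => Finset.notMem_erase i _ (hRi h)⟩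

lemma eq_smul_pd_of_sbL_sbL_pd_eq_zero (hn : 4 < n) {α : ZMod 2} {w : E n}
    (hw : w ∈ Hn n ⊓ epar n α) (i : Fin n)
    (h : ∀ z ∈ Hn n, sbL n w (sbL n (pd n i) z) = 0) : ∃ c : ℂ, w = c • pd n i := by
  have : NeZero n := ⟨by omega⟩
  have hmono : ∀ R : Finset (Fin n), i ∉ R → R.card ≤ 3 →
      sbL n w (DHmap n (mono n R)) = 0 := by
    intro R hi hR
    have hR' := h _ (DHmap_mono_mem_Hn (S := insert i R)
      (ne_univ_of_card_lt (by rw [Finset.card_insert_of_notMem hi]; omega)))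
    rw [sbL_pd_DHmap, pd_mono_of_mem (Finset.mem_insert_self i R), Finset.erase_insert hi,
      map_smul, map_smul] at hR'
    exact (smul_eq_zero.1 hR').resolve_left (msign_ne_zero _)
  have hpd : ∀ j ≠ cidx n i, sbL n (pd n j) w = 0 := by
    intro j hj
    have hij : i ∉ ({cidx n j} : Finset (Fin n)) := by
      rw [Finset.mem_singleton]
      rintro rfl
      exact hj (cidx_cidx j).symm
    rw [sbL_skew (pd_mem_epar j) hw.2, pd_eq_neg_DHmap j, map_neg, hmono _ hij (by simp), neg_zero,
      smul_zero]
  obtain ⟨c, rfl⟩ := exists_eq_sum_smul_pd hw.1 (sbL_pd_eq_zero_of_forall_ne hw.1 _ hpd)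
  refine ⟨c i, Finset.sum_eq_single i (fun j _ hji => ?_) fun hi => absurd (Finset.mem_univ _) hi⟩
  obtain ⟨R, hR, hjR, hiR⟩ := exists_card_eq_three_mem_notMem (by omega) hji
  rw [coeff_eq_zero_of_sbL_pd_sbL_eq_zero c hR.ge hjR fun l => by
    rw [hmono R hiR hR.le, map_zero], zero_smul]

lemma DHmap_mono_mono_of_unique {S T : Finset (Fin n)} {j : Fin n} (hS : j ∈ S)
    (hT : cidx n j ∈ T) (hdisj : Disjoint (S.erase j) (T.erase (cidx n j)))
    (huniq : ∀ i ∈ S, i ≠ j → ¬ Disjoint (S.erase i) (T.erase (cidx n i))) :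
    ∃ e : ℂ, e ≠ 0 ∧
      DHmap n (mono n S) (mono n T) = e • mono n (S.erase j ∪ T.erase (cidx n j)) := by
  rw [DHmap_apply, Finset.sum_eq_single j]
  · rw [par_mono, map_smul, pd_mono_of_mem hS, pd_mono_of_mem hT]
    simp only [map_smul, LinearMap.smul_apply, mulOp_mono_mono_of_disjoint hdisj, smul_smul]
    exact ⟨_, by simp [msign_ne_zero], rfl⟩
  · intro i _ hij
    rw [par_mono, map_smul]
    by_cases hiS : i ∈ S
    · by_cases hiT : cidx n i ∈ T
      · rw [pd_mono_of_mem hiS, pd_mono_of_mem hiT]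
        simp only [map_smul, LinearMap.smul_apply,
          mulOp_mono_mono_of_not_disjoint (huniq i hiS hij), smul_zero]
      · rw [pd_mono_of_notMem hiT, map_zero]
    · rw [pd_mono_of_notMem hiS, smul_zero, map_zero, LinearMap.zero_apply]
  · exact fun h => absurd (Finset.mem_univ _) h

lemma exists_DHmap_mono_eq_smul_mono_erase {m b c : Fin n} (hbm : b ≠ m) (hbm' : b ≠ cidx n m)
    (hcm : c ≠ m) (hcm' : c ≠ cidx n m) :
    ∃ e : ℂ, e ≠ 0 ∧ DHmap n (mono n {cidx n m, b, c}) (mono n {b, c}ᶜ) =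
      e • mono n (Finset.univ.erase m) := by
  have hset : ({cidx n m, b, c} : Finset (Fin n)).erase (cidx n m) ∪
      ({b, c}ᶜ : Finset (Fin n)).erase m = Finset.univ.erase m := by
    rw [Finset.erase_insert (by simp [hbm'.symm, hcm'.symm])]
    ext x
    simp only [Finset.mem_union, Finset.mem_erase, Finset.mem_compl, Finset.mem_insert,
      Finset.mem_singleton, Finset.mem_univ]
    grind
  have hmT : cidx n (cidx n m) ∈ ({b, c}ᶜ : Finset (Fin n)) := by
    simp [cidx_cidx, hbm.symm, hcm.symm]
  have huniq : ∀ i ∈ ({cidx n m, b, c} : Finset (Fin n)), i ≠ cidx n m →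
      ¬ Disjoint (({cidx n m, b, c} : Finset (Fin n)).erase i)
        (({b, c}ᶜ : Finset (Fin n)).erase (cidx n i)) := by
    intro i hi him
    have hne : cidx n m ≠ cidx n i := by
      intro h
      obtain rfl := cidx_involutive.injective h
      simp [him, hbm.symm, hcm.symm] at hi
    exact Finset.not_disjoint_iff.2 ⟨cidx n m,
      Finset.mem_erase.2 ⟨him.symm, Finset.mem_insert_self _ _⟩,
      Finset.mem_erase.2 ⟨hne, by simp [hbm'.symm, hcm'.symm]⟩⟩
  have hdisj : Disjoint (({cidx n m, b, c} : Finset (Fin n)).erase (cidx n m))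
      (({b, c}ᶜ : Finset (Fin n)).erase (cidx n (cidx n m))) := by
    rw [Finset.erase_insert (by simp [hbm'.symm, hcm'.symm])]
    exact disjoint_compl_right.mono_right (Finset.erase_subset _ _)
  have := DHmap_mono_mono_of_unique (Finset.mem_insert_self (cidx n m) {b, c}) hmT hdisj huniq
  rwa [cidx_cidx, hset] at this

lemma eq_univ_erase_of_le_card {S : Finset (Fin n)} {m : Fin n} (hm : m ∉ S)
    (hS : n ≤ S.card + 1) : S = Finset.univ.erase m := by
  refine Finset.eq_of_subset_of_card_le
    (fun x hx => Finset.mem_erase.2 ⟨ne_of_mem_of_not_mem hx hm, Finset.mem_univ x⟩) ?_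
  rw [Finset.card_erase_of_mem (Finset.mem_univ m), Finset.card_fin]
  omega

lemma sbL_pd_pd (k i : Fin n) : sbL n (pd n k) (pd n i) = 0 := by
  rw [pd_eq_neg_DHmap i, map_neg, sbL_pd_DHmap, neg_eq_zero, DHmap_eq_zero_iff]
  intro S hS
  rw [pd_apply]
  split_ifs with hk
  · rfl
  · rw [mono_apply_of_ne, mul_zero]
    intro h
    have := congrArg Finset.card h
    rw [Finset.card_insert_of_notMem hk, Finset.card_singleton] at this
    exact hS.card_ne_zero (by omega)

namespace IsSuperDer

variable {q : ZMod 2} {D : E n →ₗ[ℂ] E n} (hD : IsSuperDer n (Hn n) q D)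

include hD

lemma apply_pd_eq_zero (hn : 4 < n) (hV : ∀ z ∈ Hn n, ∀ k, sbL n (pd n k) (D z) = 0) (i : Fin n) :
    D (pd n i) = 0 := by
  have : NeZero n := ⟨by omega⟩
  have hi := pd_mem (by omega) i
  obtain ⟨c, hc⟩ := exists_eq_sum_smul_pd (hD.maps _ _ hi).1 (hV _ hi.1)
  rw [hc]
  refine Finset.sum_eq_zero fun j _ => ?_
  obtain ⟨k, hk⟩ := exists_notMem_of_card_lt (S := {j}) (by simp; omega)
  obtain ⟨R, hR, hjR, -⟩ :=
    exists_card_eq_three_mem_notMem (by omega) (Finset.notMem_singleton.1 hk).symm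
  have hz := DHmap_mono_mem (ne_univ_of_card_lt (S := R) (by omega))
  have hDiz : D (sbL n (pd n i) (DHmap n (mono n R))) =
      sbL n (∑ j, c j • pd n j) (DHmap n (mono n R)) := by
    rw [hD.leib _ _ _ hi _ hz, hV _ hz.1, smul_zero, add_zero, hc]
  rw [coeff_eq_zero_of_sbL_pd_sbL_eq_zero c hR.ge hjR fun l =>
    hDiz ▸ hV _ (sbL_mem_Hn hi.1 hz.1) l, zero_smul]

lemma apply_DHmap_mono_eq_zero_of_card_add_two_le (hn : 4 < n)
    (hV : ∀ z ∈ Hn n, ∀ k, sbL n (pd n k) (D z) = 0) {S : Finset (Fin n)} (hS : S.card + 2 ≤ n) :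
    D (DHmap n (mono n S)) = 0 := by
  obtain ⟨k, hk⟩ := exists_notMem_of_card_lt (S := S) (by omega)
  have hz := DHmap_mono_mem (S := insert k S)
    (ne_univ_of_card_lt (by rw [Finset.card_insert_of_notMem hk]; omega))
  have hleib := hD.leib _ _ _ (pd_mem (by omega) k) _ hz
  rw [sbL_pd_DHmap, hD.apply_pd_eq_zero hn hV, map_zero, LinearMap.zero_apply, hV _ hz.1,
    smul_zero, add_zero, pd_mono_of_mem (Finset.mem_insert_self k S), Finset.erase_insert hk,
    map_smul, map_smul] at hleib
  exact (smul_eq_zero.1 hleib).resolve_left (msign_ne_zero _)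

theorem eq_zero_of_sbL_pd_eq_zero (hn : 4 < n)
    (hV : ∀ z ∈ Hn n, ∀ k, sbL n (pd n k) (D z) = 0) {z : E n} (hz : z ∈ Hn n) : D z = 0 := by
  refine eq_zero_on_Hn (fun S hS => ?_) hz
  have hlow {T : Finset (Fin n)} (hT : T.card + 2 ≤ n) : D (DHmap n (mono n T)) = 0 :=
    hD.apply_DHmap_mono_eq_zero_of_card_add_two_le hn hV hT
  by_cases hcard : S.card + 2 ≤ n
  · exact hlow hcard
  obtain ⟨m, hm⟩ : ∃ m, m ∉ S := by simpa [Finset.eq_univ_iff_forall] using hS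
  obtain ⟨b, hb⟩ := exists_notMem_of_card_lt (S := {m, cidx n m})
    (Finset.card_le_two.trans_lt (by omega))
  obtain ⟨c, hc⟩ := exists_notMem_of_card_lt (S := {m, cidx n m, b})
    (Finset.card_le_three.trans_lt (by omega))
  simp only [Finset.mem_insert, Finset.mem_singleton, not_or] at hb hc
  obtain ⟨e, he, hbracket⟩ := exists_DHmap_mono_eq_smul_mono_erase hb.1 hb.2 hc.1 hc.2.1
  have hA : ({cidx n m, b, c} : Finset (Fin n)).card ≤ 3 := Finset.card_le_three
  have hB : ({b, c}ᶜ : Finset (Fin n)).card + 2 = n := by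
    rw [Finset.card_compl, Finset.card_pair (Ne.symm hc.2.2), Fintype.card_fin]
    omega
  have hleib := hD.leib _ _ _ (DHmap_mono_mem (ne_univ_of_card_lt (hA.trans_lt (by omega))))
    _ (DHmap_mono_mem (ne_univ_of_card_lt (by omega : ({b, c}ᶜ : Finset (Fin n)).card < n)))
  rw [hlow (by omega), hlow hB.le, sbL_DHmap_DHmap, hbracket, map_zero, map_zero,
    LinearMap.zero_apply, smul_zero, add_zero, map_smul, map_smul] at hleib
  rw [eq_univ_erase_of_le_card hm (by omega)]
  exact (smul_eq_zero.1 hleib).resolve_left he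

end IsSuperDer

/-- The quadratic element `x_i x_j`. For `j = i'` its Hamiltonian field `x_{i'}∂_{i'} - x_i∂_i`
is the torus element used to grade `H(n)` by weights. -/
def quad (i j : Fin n) : Lambda n := mulOp n (mono n {i}) (mono n {j})

lemma quad_eq_smul_mono {i j : Fin n} (hij : i ≠ j) :
    quad i j = msign (inversions n {i} {j}) • mono n {i, j} :=
  mulOp_mono_mono_of_disjoint (Finset.disjoint_singleton.2 hij)

lemma pd_mono_singleton (k i : Fin n) :
    pd n k (mono n {i}) = if k = i then mono n ∅ else 0 := by
  split_ifs with h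
  · rw [h, pd_mono_of_mem (Finset.mem_singleton_self i)]
    simp [msign_zero]
  · exact pd_mono_of_notMem (by simpa using h)

lemma pd_quad (k i j : Fin n) :
    pd n k (quad i j) = (if k = i then mono n {j} else 0) - if k = j then mono n {i} else 0 := by
  have hone (f : Lambda n) : mulOp n (mono n ∅) f = f := by
    funext U
    simp [mulOp_mono_apply, inversions, msign_zero]
  rw [quad, pd_mulOp, pd_mono_singleton, pd_mono_singleton, par_mono]
  split_ifs <;> simp [hone, mulOp_mono_empty, msign, sub_eq_add_neg]

lemma DHmap_quad_mem (hn : 2 < n) {i j : Fin n} (hij : i ≠ j) :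
    DHmap n (quad i j) ∈ Hn n ⊓ epar n 0 := by
  have hmem := DHmap_mono_mem (S := {i, j})
    (ne_univ_of_card_lt ((Finset.card_pair hij).trans_lt hn))
  rw [Finset.card_pair hij] at hmem
  rw [quad_eq_smul_mono hij, map_smul]
  exact Submodule.smul_mem _ _ hmem

/-- The weight of the monomial `x_S` under the Hamiltonian field of `x_i x_{i'}`. -/
def wt (i : Fin n) (S : Finset (Fin n)) : ℂ :=
  (if cidx n i ∈ S then 1 else 0) - if i ∈ S then 1 else 0

lemma DHmap_quad_cidx_apply {i : Fin n} (hi : cidx n i ≠ i) (b : Lambda n) (S : Finset (Fin n)) :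
    DHmap n (quad i (cidx n i)) b S = wt i S * b S := by
  have hpar : par n (quad i (cidx n i)) = quad i (cidx n i) := by
    rw [quad_eq_smul_mono hi.symm, map_smul, par_mono, Finset.card_pair hi.symm]
    simp [msign]
  rw [DHmap_apply, hpar, Fintype.sum_eq_add i (cidx n i) hi.symm, pd_quad, pd_quad,
    if_pos rfl, if_neg hi.symm, if_neg hi, if_pos rfl, cidx_cidx, sub_zero, zero_sub, map_neg,
    LinearMap.neg_apply, Pi.add_apply, Pi.neg_apply, mulOp_mono_singleton_pd_apply,
    mulOp_mono_singleton_pd_apply, wt]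
  · split_ifs <;> ring
  · rintro k ⟨hki, hki'⟩
    rw [pd_quad, if_neg hki, if_neg hki', sub_zero, map_zero, LinearMap.zero_apply]

lemma sbL_quad_cidx_DHmap_quad {i k : Fin n} (hi : cidx n i ≠ i) (hk : k ≠ i) (hk' : k ≠ cidx n i) :
    sbL n (DHmap n (quad i (cidx n i))) (DHmap n (quad i k)) = -DHmap n (quad i k) := by
  rw [sbL_DHmap_DHmap, ← map_neg]
  congr 1
  funext S
  rw [DHmap_quad_cidx_apply hi, quad_eq_smul_mono hk.symm, Pi.neg_apply, Pi.smul_apply]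
  obtain rfl | hS := eq_or_ne S {i, k}
  · simp [wt, hi, hk'.symm]
  · simp [mono_apply_of_ne hS]

lemma exists_eq_smul_pd_cidx {i : Fin n} (hi : cidx n i ≠ i) {w : E n} (hw : w ∈ Hn n)
    (hpd : sbL n (pd n i) w = 0) (hwt : sbL n (DHmap n (quad i (cidx n i))) w = -w) :
    ∃ c : ℂ, w = c • pd n (cidx n i) := by
  obtain ⟨b, _, rfl⟩ := mem_Hn_iff.1 hw
  have hweight : ∀ S, S.Nonempty → (wt i S + 1) * b S = 0 := by
    rw [sbL_DHmap_DHmap, eq_neg_iff_add_eq_zero, ← map_add, DHmap_eq_zero_iff] at hwt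
    intro S hS
    rw [add_one_mul, ← DHmap_quad_cidx_apply hi]
    exact hwt S hS
  have hb : DHmap n (b - b {i} • mono n {i}) = 0 := by
    refine DHmap_eq_zero_iff.2 fun S hS => ?_
    rw [Pi.sub_apply, Pi.smul_apply, smul_eq_mul]
    obtain rfl | hSi := eq_or_ne S {i}
    · rw [mono_self, mul_one, sub_self]
    rw [mono_apply_of_ne hSi, mul_zero, sub_zero]
    by_cases hiS : i ∈ S
    · refine apply_eq_zero_of_sbL_pd_eq_zero hpd hiS ?_
      by_contra hcard
      obtain ⟨j, rfl⟩ := Finset.card_eq_one.1 (by have := hS.card_pos; omega : S.card = 1)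
      exact hSi (by rw [Finset.mem_singleton.1 hiS])
    · refine (mul_eq_zero.1 (hweight S hS)).resolve_left ?_
      rw [wt, if_neg hiS]
      split_ifs <;> norm_num
  refine ⟨-b {i}, ?_⟩
  rw [map_sub, sub_eq_zero] at hb
  rw [hb, map_smul, DHmap_mono_singleton]
  module

lemma sbL_pd_DHmap_quad_left {i k : Fin n} (hik : k ≠ i) :
    sbL n (pd n i) (DHmap n (quad i k)) = -pd n (cidx n k) := by
  rw [sbL_pd_DHmap, pd_quad, if_pos rfl, if_neg hik.symm, sub_zero, DHmap_mono_singleton]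

lemma exists_sbL_pd_sbL_pd_eq_smul_pd (hn : 3 < n) {i j k : Fin n} (hij : i ≠ j) (hik : i ≠ k)
    (hjk : j ≠ k) : ∃ z ∈ Hn n, ∃ e : ℂ, e ≠ 0 ∧
      sbL n (pd n j) (sbL n (pd n i) z) = e • pd n (cidx n k) := by
  refine ⟨_, DHmap_mono_mem_Hn (S := {i, j, k})
    (ne_univ_of_card_lt (Finset.card_le_three.trans_lt hn)), ?_⟩
  rw [sbL_pd_DHmap, sbL_pd_DHmap, pd_mono_of_mem (Finset.mem_insert_self _ _),
    Finset.erase_insert (by simp [hij, hik]), map_smul,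
    pd_mono_of_mem (Finset.mem_insert_self _ _), Finset.erase_insert (by simpa using hjk),
    map_smul, map_smul, DHmap_mono_singleton, smul_neg, smul_neg, smul_smul, ← neg_smul]
  exact ⟨_, by simp [msign_ne_zero], rfl⟩

lemma pd_ne_zero (i : Fin n) : pd n i ≠ 0 := by
  intro h
  have := congrFun (LinearMap.congr_fun h (mono n {i})) ∅
  rw [pd_apply_empty, mono_self] at this
  exact one_ne_zero this

lemma coeff_eq_zero_of_sbL_pd_eq_smul {w : E n} (hw : w ∈ Hn n) {k : Fin n} {c : ℂ}
    (h : sbL n (pd n k) w = c • pd n (cidx n k)) : c = 0 := by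
  obtain ⟨b, _, rfl⟩ := mem_Hn_iff.1 hw
  rw [sbL_pd_DHmap, pd_eq_neg_DHmap (cidx n k), cidx_cidx, smul_neg, ← map_smul,
    eq_neg_iff_add_eq_zero, ← map_add, DHmap_eq_zero_iff] at h
  simpa [pd_apply, mono_self] using h {k} (Finset.singleton_nonempty k)

lemma sbL_isSuperDer {x : E n} {q : ZMod 2} (hx : x ∈ Hn n ⊓ epar n q) :
    IsSuperDer n (Hn n) q (sbL n x) where
  maps α _ hy := ⟨sbL_mem_Hn hx.1 hy.1, add_comm q α ▸ sbL_mem_epar hx.2 hy.2⟩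
  leib _ _ _ hy _ hz := sbL_leibniz hx.2 hy.2 hz.2

namespace IsSuperDer

variable {q : ZMod 2} {D : E n →ₗ[ℂ] E n}

lemma apply_mem (hD : IsSuperDer n (Hn n) q D) {z : E n} (hz : z ∈ Hn n) : D z ∈ Hn n := by
  rw [← Submodule.Quotient.mk_eq_zero]
  exact eq_zero_on_Hn (L := (Hn n).mkQ ∘ₗ D)
    (fun S hS => (Submodule.Quotient.mk_eq_zero _).2 (hD.maps _ _ (DHmap_mono_mem hS)).1) hz

lemma sub (hD : IsSuperDer n (Hn n) q D) {F : E n →ₗ[ℂ] E n} (hF : IsSuperDer n (Hn n) q F) :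
    IsSuperDer n (Hn n) q (D - F) where
  maps α y hy := sub_mem (hD.maps α y hy) (hF.maps α y hy)
  leib α β y hy z hz := by
    simp only [LinearMap.sub_apply, map_sub, hD.leib α β y hy z hz, hF.leib α β y hy z hz]
    module

lemma eq_of_sbL_pd_eq {F : E n →ₗ[ℂ] E n} (hD : IsSuperDer n (Hn n) q D)
    (hF : IsSuperDer n (Hn n) q F) (hn : 4 < n)
    (h : ∀ z ∈ Hn n, ∀ k, sbL n (pd n k) (D z) = sbL n (pd n k) (F z)) {z : E n} (hz : z ∈ Hn n) :
    D z = F z :=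
  sub_eq_zero.1 <| (hD.sub hF).eq_zero_of_sbL_pd_eq_zero hn
    (fun z hz k => by rw [LinearMap.sub_apply, map_sub, h z hz k, sub_self]) hz

-- Apply `[∂_i, ·]` to the Leibniz rule for `D[y, z]`.
lemma sbL_apply_sbL_pd_eq (hD : IsSuperDer n (Hn n) q D) {i : Fin n}
    (hi : ∀ z ∈ Hn n, sbL n (pd n i) (D z) = 0) {α β : ZMod 2} {y z : E n}
    (hy : y ∈ Hn n ⊓ epar n α) (hz : z ∈ Hn n ⊓ epar n β) :
    sgn (α + q) • sbL n (D y) (sbL n (pd n i) z) =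
      -(sgn (q * α) • sbL n (sbL n (pd n i) y) (D z)) := by
  have h := hi _ (sbL_mem_Hn hy.1 hz.1)
  rw [hD.leib _ _ _ hy _ hz, map_add, map_smul,
    sbL_leibniz (pd_mem_epar i) (hD.maps _ _ hy).2 hz.2,
    sbL_leibniz (pd_mem_epar i) hy.2 (hD.maps _ _ hz).2, hi _ hy.1, hi _ hz.1] at h
  simp only [map_zero, smul_zero, add_zero, LinearMap.zero_apply, zero_add, one_mul] at h
  exact eq_neg_of_add_eq_zero_left h

lemma exists_sbL_pd_apply_eq (hD : IsSuperDer n (Hn n) q D) (hn : 2 < n) {i k : Fin n}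
    (hcidx : cidx n i ≠ i) (hki : k ≠ i) (hki' : k ≠ cidx n i)
    (hi : ∀ z ∈ Hn n, sbL n (pd n i) (D z) = 0) (htorus : D (DHmap n (quad i (cidx n i))) = 0) :
    ∃ c : ℂ, ∀ z ∈ Hn n, sbL n (pd n (cidx n k)) (D z) =
      c • sbL n (pd n (cidx n i)) (sbL n (pd n i) z) := by
  have hy := DHmap_quad_mem hn hki.symm
  have hweight : sbL n (DHmap n (quad i (cidx n i))) (D (DHmap n (quad i k))) =
      -D (DHmap n (quad i k)) := by
    have h := hD.leib _ _ _ (DHmap_quad_mem hn hcidx.symm) _ hy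
    rwa [sbL_quad_cidx_DHmap_quad hcidx hki hki', htorus, map_zero, LinearMap.zero_apply, zero_add,
      mul_zero, sgn_zero, one_smul, map_neg, eq_comm] at h
  obtain ⟨c, hc⟩ := exists_eq_smul_pd_cidx hcidx (hD.maps _ _ hy).1 (hi _ hy.1) hweight
  refine ⟨sgn q * c, fun z hz => ?_⟩
  refine eq_on_Hn (L := sbL n (pd n (cidx n k)) ∘ₗ D)
    (L' := (sgn q * c) • (sbL n (pd n (cidx n i)) ∘ₗ sbL n (pd n i))) (fun S hS => ?_) hz
  have h := hD.sbL_apply_sbL_pd_eq hi hy (DHmap_mono_mem hS)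
  rw [hc, sbL_pd_DHmap_quad_left hki, zero_add, mul_zero, sgn_zero, one_smul, map_neg,
    LinearMap.neg_apply, neg_neg, map_smul, LinearMap.smul_apply, smul_smul] at h
  exact h.symm

lemma eq_zero_of_sbL_pd_eq_zero_of_torus (hD : IsSuperDer n (Hn n) q D) (hn : 4 < n) {i : Fin n}
    (hcidx : cidx n i ≠ i) (hi : ∀ z ∈ Hn n, sbL n (pd n i) (D z) = 0)
    (htorus : D (DHmap n (quad i (cidx n i))) = 0) {z : E n} (hz : z ∈ Hn n) : D z = 0 := by
  have hpd : ∀ j ≠ cidx n i, ∀ z ∈ Hn n, sbL n (pd n j) (D z) = 0 := by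
    intro j hj z hz
    obtain rfl | hji := eq_or_ne j i
    · exact hi z hz
    have hki : cidx n j ≠ i := fun h => hj (by rw [← h, cidx_cidx])
    have hki' : cidx n j ≠ cidx n i := cidx_involutive.injective.ne hji
    obtain ⟨c, hc⟩ := hD.exists_sbL_pd_apply_eq (by omega) hcidx hki hki' hi htorus
    rw [cidx_cidx] at hc
    obtain ⟨u, hu, e, he, hue⟩ :=
      exists_sbL_pd_sbL_pd_eq_smul_pd (by omega) hcidx.symm hji.symm hj.symm
    have hDu := hc u hu
    rw [hue, smul_smul] at hDu
    have hc0 := (mul_eq_zero.1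
      (coeff_eq_zero_of_sbL_pd_eq_smul (hD.apply_mem hu) hDu)).resolve_right he
    rw [hc z hz, hc0, zero_smul]
  exact hD.eq_zero_of_sbL_pd_eq_zero hn (fun z hz =>
    sbL_pd_eq_zero_of_forall_ne (hD.apply_mem hz) _ fun j hj => hpd j hj z hz) hz

theorem exists_eq_smul_sbL_pd (hD : IsSuperDer n (Hn n) q D) (hn : 4 < n) {i : Fin n}
    (hcidx : cidx n i ≠ i) (hi : ∀ z ∈ Hn n, sbL n (pd n i) (D z) = 0) :
    ∃ c : ℂ, (c ≠ 0 → q = 1) ∧ ∀ z ∈ Hn n, D z = c • sbL n (pd n i) z := by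
  have hh := DHmap_quad_mem (by omega) hcidx.symm
  have hih := sbL_pd_DHmap_quad_left hcidx
  rw [cidx_cidx] at hih
  have hDh := hD.maps _ _ hh
  have hcentral : ∀ z ∈ Hn n, sbL n (D (DHmap n (quad i (cidx n i)))) (sbL n (pd n i) z) = 0 := by
    refine fun z hz => eq_zero_on_Hn
      (L := sbL n (D (DHmap n (quad i (cidx n i)))) ∘ₗ sbL n (pd n i)) (fun S hS => ?_) hz
    have hz := DHmap_mono_mem hS
    have h := hD.sbL_apply_sbL_pd_eq hi hh hz
    rw [hih, map_neg, LinearMap.neg_apply, hi _ hz.1, neg_zero, smul_zero, neg_zero] at h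
    exact (smul_eq_zero.1 h).resolve_left (sgn_ne_zero _)
  obtain ⟨c, hc⟩ := eq_smul_pd_of_sbL_sbL_pd_eq_zero hn hDh i hcentral
  have hD' := hD.sub (sbL_isSuperDer (neg_mem (zero_add q ▸ hDh)))
  rw [hc, ← neg_one_smul ℂ, smul_smul, neg_one_mul] at hD'
  refine ⟨-c, fun hc0 => ?_, fun z hz => ?_⟩
  · rw [neg_ne_zero] at hc0
    exact eq_of_mem_epar (zero_add q ▸ hDh.2) (hc ▸ Submodule.smul_mem _ c (pd_mem_epar i))
      (hc ▸ smul_ne_zero hc0 (pd_ne_zero i))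
  rw [← LinearMap.smul_apply, ← map_smul, ← sub_eq_zero]
  refine hD'.eq_zero_of_sbL_pd_eq_zero_of_torus hn hcidx (fun z hz => ?_) ?_ hz
  · obtain ⟨a, _, rfl⟩ := mem_Hn_iff.1 hz
    rw [LinearMap.sub_apply, map_sub, hi _ hz, map_smul, LinearMap.smul_apply, map_smul,
      sbL_pd_DHmap, sbL_pd_DHmap, pd_pd_self, map_zero, smul_zero, sub_zero]
  · rw [LinearMap.sub_apply, map_smul, LinearMap.smul_apply, hih, hc]
    module

end IsSuperDer

lemma smul_sbL_isSuperBider {q : ZMod 2} {c : ℂ} (hq : c ≠ 0 → q = 0) :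
    IsSuperBider n (Hn n) q (c • sbL n) := by
  obtain rfl | hc := eq_or_ne c 0
  · rw [zero_smul]
    exact ⟨by simp, by simp, by simp⟩
  obtain rfl := hq hc
  refine ⟨fun α β x hx y hy => ?_, fun α β γ x hx y hy z hz => ?_, fun α β γ x hx y hy z hz => ?_⟩
  · simp only [LinearMap.smul_apply, add_zero]
    exact Submodule.smul_mem _ _ ⟨sbL_mem_Hn hx.1 hy.1, sbL_mem_epar hx.2 hy.2⟩
  · simp only [LinearMap.smul_apply, mul_zero, sgn_zero, one_smul, map_smul]
    rw [sbL_leibniz hx.2 hy.2 hz.2, sbL_skew (sbL_mem_epar hx.2 hz.2) hy.2]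
    have hsgn : sgn (β * γ) * sgn ((α + γ) * β) = sgn (α * β) := by
      rw [← sgn_add, add_mul, mul_comm β γ, add_left_comm, CharTwo.add_self_eq_zero, add_zero]
    rw [← hsgn]
    module
  · simp only [LinearMap.smul_apply, zero_add, sbL_leibniz hx.2 hy.2 hz.2, map_smul]
    module

lemma le_val_add_one_of_cidx_eq_self {i : Fin n} (h : cidx n i = i) : n ≤ i.val + 1 := by
  have hval := congrArg Fin.val h
  simp only [cidx] at hval
  split_ifs at hval <;> omega

namespace IsSuperBider

variable {q : ZMod 2} {f g : E n →ₗ[ℂ] E n →ₗ[ℂ] E n}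

lemma isSuperDer (hf : IsSuperBider n (Hn n) q f) {α : ZMod 2} {x : E n}
    (hx : x ∈ Hn n ⊓ epar n α) : IsSuperDer n (Hn n) (q + α) (f x) where
  maps β y hy := by
    rw [show β + (q + α) = α + β + q by ring]
    exact hf.maps α β x hx y hy
  leib β γ y hy z hz := hf.eq2 α β γ x hx y hy z hz

-- Expand `f([∂_j, ∂_i], z) = 0`.
lemma sbL_pd_apply_pd_antisymm (hf : IsSuperBider n (Hn n) q f) (hn : 1 < n) (i j : Fin n)
    {z : E n} (hz : z ∈ Hn n) :
    sbL n (pd n j) (f (pd n i) z) = -sbL n (pd n i) (f (pd n j) z) := by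
  rw [eq_neg_iff_add_eq_zero]
  refine eq_zero_on_Hn (L := sbL n (pd n j) ∘ₗ f (pd n i) + sbL n (pd n i) ∘ₗ f (pd n j))
    (fun S hS => (smul_eq_zero.1 ?_).resolve_left (sgn_ne_zero q)) hz
  have hz := DHmap_mono_mem hS
  have h := hf.eq1 _ _ _ _ (pd_mem hn j) _ (pd_mem hn i) _ hz
  rw [sbL_pd_pd, map_zero, LinearMap.zero_apply,
    sbL_skew (hf.maps _ _ _ (pd_mem hn j) _ hz).2 (pd_mem_epar i)] at h
  rw [h, LinearMap.add_apply, LinearMap.comp_apply, LinearMap.comp_apply]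
  generalize (S.card : ZMod 2) = γ
  obtain rfl | rfl := zmod_two_cases q <;> obtain rfl | rfl := zmod_two_cases γ <;>
    simp only [mul_one, mul_zero, add_zero, zero_add, sgn_zero, sgn_one,
      CharTwo.add_self_eq_zero] <;> module

lemma sbL_pd_apply_pd_self (hf : IsSuperBider n (Hn n) q f) (hn : 1 < n) (i : Fin n)
    {z : E n} (hz : z ∈ Hn n) : sbL n (pd n i) (f (pd n i) z) = 0 :=
  LinearMap.ext fun v =>
    self_eq_neg.1 (LinearMap.congr_fun (hf.sbL_pd_apply_pd_antisymm hn i i hz) v)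

lemma eq_of_apply_pd_eq (hf : IsSuperBider n (Hn n) q f) (hg : IsSuperBider n (Hn n) q g)
    (hn : 4 < n) (h : ∀ k, ∀ z ∈ Hn n, f (pd n k) z = g (pd n k) z) {x z : E n} (hx : x ∈ Hn n)
    (hz : z ∈ Hn n) : f x z = g x z := by
  refine eq_on_Hn (L := f.flip z) (L' := g.flip z) (fun S hS => ?_) hx
  rw [LinearMap.flip_apply, LinearMap.flip_apply]
  induction S using Finset.strongInduction generalizing z with
  | H S ih =>
    have hx := DHmap_mono_mem hS
    refine (hf.isSuperDer hx).eq_of_sbL_pd_eq (hg.isSuperDer hx) hn (fun z hz k => ?_) hz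
    refine eq_on_Hn (L := sbL n (pd n k) ∘ₗ f (DHmap n (mono n S)))
      (L' := sbL n (pd n k) ∘ₗ g (DHmap n (mono n S))) (fun T hT => ?_) hz
    have hy := DHmap_mono_mem hT
    have hpd := pd_mem (by omega) k
    have hlower : f (sbL n (pd n k) (DHmap n (mono n S))) (DHmap n (mono n T)) =
        g (sbL n (pd n k) (DHmap n (mono n S))) (DHmap n (mono n T)) := by
      rw [sbL_pd_DHmap]
      by_cases hk : k ∈ S
      · have hne : S.erase k ≠ Finset.univ := fun hu =>
          Finset.notMem_erase k S (hu ▸ Finset.mem_univ k)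
        simp only [pd_mono_of_mem hk, map_smul, LinearMap.smul_apply,
          ih _ (Finset.erase_ssubset hk) hy.1 hne]
      · simp only [pd_mono_of_notMem hk, map_zero, LinearMap.zero_apply]
    rw [hf.eq1 _ _ _ _ hpd _ hx _ hy, hg.eq1 _ _ _ _ hpd _ hx _ hy, h k _ hy.1,
      add_left_inj] at hlower
    exact smul_right_injective _ (sgn_ne_zero _) hlower

lemma exists_apply_pd_eq_smul (hf : IsSuperBider n (Hn n) q f) (hn : 4 < n) {i : Fin n}
    (hi : cidx n i ≠ i) :
    ∃ c : ℂ, (c ≠ 0 → q = 0) ∧ ∀ z ∈ Hn n, f (pd n i) z = c • sbL n (pd n i) z := by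
  have hpd := pd_mem (by omega : 1 < n) i
  obtain ⟨c, hq, hc⟩ := (hf.isSuperDer hpd).exists_eq_smul_sbL_pd hn hi
    fun z hz => hf.sbL_pd_apply_pd_self (by omega) i hz
  exact ⟨c, fun h => add_eq_right.1 (hq h), hc⟩

lemma apply_pd_coeff_eq (hf : IsSuperBider n (Hn n) q f) (hn : 3 < n) {i j : Fin n} {c d : ℂ}
    (hi : ∀ z ∈ Hn n, f (pd n i) z = c • sbL n (pd n i) z)
    (hj : ∀ z ∈ Hn n, f (pd n j) z = d • sbL n (pd n j) z) (hij : i ≠ j) : c = d := by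
  obtain ⟨k, hk⟩ := exists_notMem_of_card_lt (S := {i, j})
    ((Finset.card_pair hij).trans_lt (by omega))
  simp only [Finset.mem_insert, Finset.mem_singleton, not_or] at hk
  obtain ⟨z, hz, e, he, hze⟩ :=
    exists_sbL_pd_sbL_pd_eq_smul_pd hn hij (Ne.symm hk.1) (Ne.symm hk.2)
  have hcomm : sbL n (pd n i) (sbL n (pd n j) z) = -sbL n (pd n j) (sbL n (pd n i) z) := by
    obtain ⟨a, _, rfl⟩ := mem_Hn_iff.1 hz
    simp only [sbL_pd_DHmap]
    rw [pd_pd_comm, map_neg]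
  have h := hf.sbL_pd_apply_pd_antisymm (by omega) i j hz
  rw [hi z hz, hj z hz, map_smul, map_smul, hcomm, smul_neg, neg_neg, hze, smul_smul,
    smul_smul] at h
  exact mul_right_cancel₀ he (smul_left_injective ℂ (pd_ne_zero _) h)

lemma eq_of_apply_pd_eq_of_cidx_ne (hf : IsSuperBider n (Hn n) q f)
    (hg : IsSuperBider n (Hn n) q g) (hn : 4 < n)
    (h : ∀ k, cidx n k ≠ k → ∀ z ∈ Hn n, f (pd n k) z = g (pd n k) z) {x z : E n} (hx : x ∈ Hn n)
    (hz : z ∈ Hn n) : f x z = g x z := by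
  refine hf.eq_of_apply_pd_eq hg hn (fun i z hz => ?_) hx hz
  obtain hi | hi := ne_or_eq (cidx n i) i
  · exact h i hi z hz
  have hpd := pd_mem (by omega : 1 < n) i
  refine (hf.isSuperDer hpd).eq_of_sbL_pd_eq (hg.isSuperDer hpd) hn (fun z hz k => ?_) hz
  obtain rfl | hki := eq_or_ne k i
  · rw [hf.sbL_pd_apply_pd_self (by omega) k hz, hg.sbL_pd_apply_pd_self (by omega) k hz]
  have hk : cidx n k ≠ k := fun hk => hki <| Fin.ext <| by
    have := le_val_add_one_of_cidx_eq_self hi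
    have := le_val_add_one_of_cidx_eq_self hk
    omega
  rw [hf.sbL_pd_apply_pd_antisymm (by omega) i k hz, h k hk z hz,
    hg.sbL_pd_apply_pd_antisymm (by omega) i k hz]

end IsSuperBider

end

/-- Every (homogeneous) super-biderivation of the Hamiltonian Lie
superalgebra `H(n)`, `n > 4`, over `ℂ` is an inner super-biderivation:
`BDer(H(n)) = IBDer(H(n))`. -/
theorem superBider_inner_H (n : ℕ) (hn : 4 < n)
    (pf : ZMod 2) (f : E n →ₗ[ℂ] E n →ₗ[ℂ] E n)
    (hf : IsSuperBider n (CT.H.algebra n) pf f) :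
    ∃ lam : ℂ, ∀ x ∈ CT.H.algebra n, ∀ y ∈ CT.H.algebra n, f x y = lam • sbL n x y := by
  let o : Fin n := ⟨0, by omega⟩
  have ho : cidx n o ≠ o := fun h => by
    have := le_val_add_one_of_cidx_eq_self h
    simp only [o] at this
    omega
  obtain ⟨lam, hq, hlam⟩ := IsSuperBider.exists_apply_pd_eq_smul hf hn ho
  refine ⟨lam, fun x hx y hy => ?_⟩
  refine IsSuperBider.eq_of_apply_pd_eq_of_cidx_ne hf (smul_sbL_isSuperBider hq) hn ?_ hx hy
  intro i hi z hz
  obtain rfl | hio := eq_or_ne i o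
  · exact hlam z hz
  obtain ⟨c, -, hc⟩ := IsSuperBider.exists_apply_pd_eq_smul hf hn hi
  have hclam : c = lam := IsSuperBider.apply_pd_coeff_eq hf (by omega) hc hlam hio
  rw [hc z hz, hclam, LinearMap.smul_apply, LinearMap.smul_apply]

end CartanSuper
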